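/- arXiv:q-alg/9511001 — 2 statements merged into one kernel-verified Lean document; each statement's English description precedes it below -/
import Mathlib

section
/- Let H be a quasitriangular Hopf algebra over a field k and let D be a braided group in the braided category of left H-modules, with invertible braided antipode S̲. Then D^{cop̲} — the same algebra, unit and counit as D, equipped with the opposite braided coproduct Ψ_{D,D}^{-1}∘Δ̲ and antipode S̲^{-1} — is a braided group in the braided category of left modules over H̄, where H̄ denotes the Hopf algebra H equipped with the quasitriangular structure 𝓑̄ = 𝓑₂₁⁻¹. -/
/-
The braiding of left modules over `H` with the structure `𝓑₂₁⁻¹` is the inverse of the braiding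
given by `𝓑`, so the statement is an instance of a fact about any braided category: if `X` is a
Hopf monoid whose antipode `𝒮` is invertible, then `Δ ≫ β⁻¹` and `𝒮⁻¹` make `X` a Hopf monoid for
the reverse braiding. Coassociativity is the Yang-Baxter equation for `β⁻¹`; multiplicativity is
naturality of `β⁻¹`, as `β⁻¹` between tensor squares cancels the interchange `tensorμ` and leaves
the interchange of the reverse braiding; and the antipode axioms follow on composing with `𝒮`,
which is antimultiplicative.
-/

open TensorProduct LinearMap

namespace DBos

variable (k : Type) [Field k]
variable (H : Type) [Ring H] [HopfAlgebra k H]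

/-- The four-fold transposition `(V⊗W)⊗(X⊗Y) → (V⊗X)⊗(W⊗Y)`. -/
noncomputable def tttc (V W X Y : Type) [AddCommGroup V] [Module k V] [AddCommGroup W]
    [Module k W] [AddCommGroup X] [Module k X] [AddCommGroup Y] [Module k Y] :
    (V ⊗[k] W) ⊗[k] (X ⊗[k] Y) →ₗ[k] (V ⊗[k] X) ⊗[k] (W ⊗[k] Y) :=
  (TensorProduct.tensorTensorTensorComm k V W X Y).toLinearMap

/-- A quasitriangular structure on a Hopf algebra `H`: an invertible element
`𝓡 ∈ H ⊗ H` satisfying the Drinfeld axioms `(Δ⊗id)𝓡 = 𝓡₁₃𝓡₂₃`,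
`(id⊗Δ)𝓡 = 𝓡₁₃𝓡₁₂` and `τ∘Δ = 𝓡(Δ·)𝓡⁻¹`. -/
structure IsQT (R Rinv : H ⊗[k] H) : Prop where
  mul_inv : R * Rinv = 1
  inv_mul : Rinv * R = 1
  comul_fst :
    TensorProduct.map (Coalgebra.comul (R := k)) LinearMap.id R =
      (LinearMap.rTensor H (Algebra.TensorProduct.includeLeft
          (R := k) (S := k) (A := H) (B := H)).toLinearMap) R *
      (LinearMap.rTensor H (Algebra.TensorProduct.includeRight
          (R := k) (A := H) (B := H)).toLinearMap) R
  comul_snd :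
    TensorProduct.map LinearMap.id (Coalgebra.comul (R := k)) R =
      (LinearMap.lTensor H (Algebra.TensorProduct.includeRight
          (R := k) (A := H) (B := H)).toLinearMap) R *
      (LinearMap.lTensor H (Algebra.TensorProduct.includeLeft
          (R := k) (S := k) (A := H) (B := H)).toLinearMap) R
  quasi_comm : ∀ h : H,
    (TensorProduct.comm k H H) (Coalgebra.comul (R := k) h) * R =
      R * Coalgebra.comul (R := k) h

/-- A right `H`-module algebra, written with a curried right action. -/
structure IsModAlgR (B : Type) [Ring B] [Algebra k B]
    (act : B →ₗ[k] H →ₗ[k] B) : Prop where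
  act_one : ∀ b, act b 1 = b
  act_act : ∀ b h g, act (act b h) g = act b (h * g)
  one_act : ∀ h, act 1 h = Coalgebra.counit (R := k) h • (1 : B)
  mul_act : ∀ (h : H) (ι : Type) [Fintype ι] (h1 h2 : ι → H),
    Coalgebra.comul (R := k) h = ∑ i, h1 i ⊗ₜ[k] h2 i →
    ∀ b b' : B, act (b * b') h = ∑ i, act b (h1 i) * act b' (h2 i)

/-- A left `H`-module algebra, written with a curried left action. -/
structure IsModAlgL (C : Type) [Ring C] [Algebra k C]
    (act : H →ₗ[k] C →ₗ[k] C) : Prop where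
  one_act : ∀ c, act 1 c = c
  act_act : ∀ h g c, act h (act g c) = act (h * g) c
  act_one : ∀ h, act h (1 : C) = Coalgebra.counit (R := k) h • (1 : C)
  act_mul : ∀ (h : H) (ι : Type) [Fintype ι] (h1 h2 : ι → H),
    Coalgebra.comul (R := k) h = ∑ i, h1 i ⊗ₜ[k] h2 i →
    ∀ c c' : C, act h (c * c') = ∑ i, act (h1 i) c * act (h2 i) c'

/-- A braided group (Hopf algebra in the braided category) of right `H`-modules,
with braiding `Ψ(v ⊗ w) = (w ◁ 𝓡⁽¹⁾) ⊗ (v ◁ 𝓡⁽²⁾)` determined by the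
quasitriangular element `R`.  All comultiplication identities are stated in
Sweedler form: they are quantified over arbitrary finite representations of the
relevant coproducts as sums of pure tensors. -/
structure IsBraidedGroupR (R : H ⊗[k] H) (B : Type) [Ring B] [Algebra k B]
    (act : B →ₗ[k] H →ₗ[k] B) (cm : B →ₗ[k] B ⊗[k] B)
    (cu : B →ₗ[k] k) (S : B →ₗ[k] B) : Prop where
  modAlg : IsModAlgR k H B act
  coassoc : (TensorProduct.assoc k B B B).toLinearMap ∘ₗ LinearMap.rTensor B cm ∘ₗ cm
      = LinearMap.lTensor B cm ∘ₗ cm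
  counit_left : (TensorProduct.lid k B).toLinearMap ∘ₗ LinearMap.rTensor B cu ∘ₗ cm
      = LinearMap.id
  counit_right : (TensorProduct.rid k B).toLinearMap ∘ₗ LinearMap.lTensor B cu ∘ₗ cm
      = LinearMap.id
  cu_one : cu 1 = 1
  cu_mul : ∀ b b', cu (b * b') = cu b * cu b'
  cu_act : ∀ b h, cu (act b h) = cu b * Coalgebra.counit (R := k) h
  cm_one : cm 1 = 1 ⊗ₜ[k] 1
  cm_act : ∀ (b : B) (h : H) (ι : Type) [Fintype ι] (b1 b2 : ι → B)
      (κ : Type) [Fintype κ] (h1 h2 : κ → H),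
      cm b = ∑ i, b1 i ⊗ₜ[k] b2 i →
      Coalgebra.comul (R := k) h = ∑ j, h1 j ⊗ₜ[k] h2 j →
      cm (act b h) = ∑ i, ∑ j, act (b1 i) (h1 j) ⊗ₜ[k] act (b2 i) (h2 j)
  cm_mul : ∀ (b b' : B) (ι : Type) [Fintype ι] (b1 b2 : ι → B)
      (κ : Type) [Fintype κ] (b1' b2' : κ → B)
      (ρ : Type) [Fintype ρ] (r1 r2 : ρ → H),
      cm b = ∑ i, b1 i ⊗ₜ[k] b2 i → cm b' = ∑ j, b1' j ⊗ₜ[k] b2' j →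
      R = ∑ r, r1 r ⊗ₜ[k] r2 r →
      cm (b * b') = ∑ i, ∑ j, ∑ r,
        (b1 i * act (b1' j) (r1 r)) ⊗ₜ[k] (act (b2 i) (r2 r) * b2' j)
  antipode_left : ∀ (b : B) (ι : Type) [Fintype ι] (b1 b2 : ι → B),
      cm b = ∑ i, b1 i ⊗ₜ[k] b2 i → ∑ i, S (b1 i) * b2 i = cu b • (1 : B)
  antipode_right : ∀ (b : B) (ι : Type) [Fintype ι] (b1 b2 : ι → B),
      cm b = ∑ i, b1 i ⊗ₜ[k] b2 i → ∑ i, b1 i * S (b2 i) = cu b • (1 : B)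
  antipode_act : ∀ b h, S (act b h) = act (S b) h

/-- A braided group in the braided category of left `H`-modules, with braiding
`Ψ(v ⊗ w) = (ρ⁽²⁾ ▷ w) ⊗ (ρ⁽¹⁾ ▷ v)` determined by the quasitriangular element `ρ`. -/
structure IsBraidedGroupL (rho : H ⊗[k] H) (C : Type) [Ring C] [Algebra k C]
    (act : H →ₗ[k] C →ₗ[k] C) (cm : C →ₗ[k] C ⊗[k] C)
    (cu : C →ₗ[k] k) (S : C →ₗ[k] C) : Prop where
  modAlg : IsModAlgL k H C act
  coassoc : (TensorProduct.assoc k C C C).toLinearMap ∘ₗ LinearMap.rTensor C cm ∘ₗ cm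
      = LinearMap.lTensor C cm ∘ₗ cm
  counit_left : (TensorProduct.lid k C).toLinearMap ∘ₗ LinearMap.rTensor C cu ∘ₗ cm
      = LinearMap.id
  counit_right : (TensorProduct.rid k C).toLinearMap ∘ₗ LinearMap.lTensor C cu ∘ₗ cm
      = LinearMap.id
  cu_one : cu 1 = 1
  cu_mul : ∀ c c', cu (c * c') = cu c * cu c'
  cu_act : ∀ h c, cu (act h c) = Coalgebra.counit (R := k) h * cu c
  cm_one : cm 1 = 1 ⊗ₜ[k] 1
  cm_act : ∀ (c : C) (h : H) (ι : Type) [Fintype ι] (c1 c2 : ι → C)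
      (κ : Type) [Fintype κ] (h1 h2 : κ → H),
      cm c = ∑ i, c1 i ⊗ₜ[k] c2 i →
      Coalgebra.comul (R := k) h = ∑ j, h1 j ⊗ₜ[k] h2 j →
      cm (act h c) = ∑ i, ∑ j, act (h1 j) (c1 i) ⊗ₜ[k] act (h2 j) (c2 i)
  cm_mul : ∀ (c c' : C) (ι : Type) [Fintype ι] (c1 c2 : ι → C)
      (κ : Type) [Fintype κ] (c1' c2' : κ → C)
      (σ : Type) [Fintype σ] (r1 r2 : σ → H),
      cm c = ∑ i, c1 i ⊗ₜ[k] c2 i → cm c' = ∑ j, c1' j ⊗ₜ[k] c2' j →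
      rho = ∑ r, r1 r ⊗ₜ[k] r2 r →
      cm (c * c') = ∑ i, ∑ j, ∑ r,
        (c1 i * act (r2 r) (c1' j)) ⊗ₜ[k] (act (r1 r) (c2 i) * c2' j)
  antipode_left : ∀ (c : C) (ι : Type) [Fintype ι] (c1 c2 : ι → C),
      cm c = ∑ i, c1 i ⊗ₜ[k] c2 i → ∑ i, S (c1 i) * c2 i = cu c • (1 : C)
  antipode_right : ∀ (c : C) (ι : Type) [Fintype ι] (c1 c2 : ι → C),
      cm c = ∑ i, c1 i ⊗ₜ[k] c2 i → ∑ i, c1 i * S (c2 i) = cu c • (1 : C)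
  antipode_act : ∀ h c, S (act h c) = act h (S c)

/-- The categorical duality pairing `ev : C ⊗ B → k` between braided groups `C, B`
in the category of right `H`-modules: `ev(cd,b) = ev(d,b₍₁₎)ev(c,b₍₂₎)`,
`ev(c,ab) = ev(c₍₂₎,a)ev(c₍₁₎,b)`, and `ev` is an `H`-module map. -/
structure IsCatPairing (B C : Type) [Ring B] [Algebra k B] [Ring C] [Algebra k C]
    (actB : B →ₗ[k] H →ₗ[k] B) (cmB : B →ₗ[k] B ⊗[k] B) (cuB : B →ₗ[k] k)
    (actC : C →ₗ[k] H →ₗ[k] C) (cmC : C →ₗ[k] C ⊗[k] C) (cuC : C →ₗ[k] k)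
    (ev : C →ₗ[k] B →ₗ[k] k) : Prop where
  equivariant : ∀ (c : C) (b : B) (h : H) (ι : Type) [Fintype ι] (h1 h2 : ι → H),
    Coalgebra.comul (R := k) h = ∑ j, h1 j ⊗ₜ[k] h2 j →
    ∑ j, ev (actC c (h1 j)) (actB b (h2 j)) = ev c b * Coalgebra.counit (R := k) h
  mul_left : ∀ (c d : C) (b : B) (ι : Type) [Fintype ι] (b1 b2 : ι → B),
    cmB b = ∑ i, b1 i ⊗ₜ[k] b2 i →
    ev (c * d) b = ∑ i, ev d (b1 i) * ev c (b2 i)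
  mul_right : ∀ (c : C) (a b : B) (ι : Type) [Fintype ι] (c1 c2 : ι → C),
    cmC c = ∑ i, c1 i ⊗ₜ[k] c2 i →
    ev c (a * b) = ∑ i, ev (c2 i) a * ev (c1 i) b
  one_left : ∀ b, ev 1 b = cuB b
  one_right : ∀ c, ev c 1 = cuC c


section Stmt0

variable (D : Type) [Ring D] [Algebra k D]

/-- The inverse `Ψ⁻¹` of the braiding of left `H`-modules:
`Ψ⁻¹(v ⊗ w) = (𝓡⁻⁽¹⁾ ▷ w) ⊗ (𝓡⁻⁽²⁾ ▷ v)`. -/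
noncomputable def braidLinv (Rinv : H ⊗[k] H) (act : H →ₗ[k] D →ₗ[k] D) :
    D ⊗[k] D →ₗ[k] D ⊗[k] D :=
  (TensorProduct.map (TensorProduct.lift act) (TensorProduct.lift act))
    ∘ₗ tttc k H H D D
    ∘ₗ (TensorProduct.mk k (H ⊗[k] H) (D ⊗[k] D) Rinv)
    ∘ₗ (TensorProduct.comm k D D).toLinearMap

section OppositeBraidedCoproduct

open CategoryTheory MonoidalCategory BraidedCategory MonObj ComonObj HopfObj

universe v u

variable {C : Type u} [Category.{v} C] [MonoidalCategory C] [BraidedCategory C]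

theorem braiding_inv_tensor_assoc (X Y Z : C) :
    (β_ (Y ⊗ Z) X).inv ≫ (β_ Z Y).inv ▷ X ≫ (α_ Z Y X).hom =
      (α_ X Y Z).inv ≫ (β_ Z (X ⊗ Y)).inv ≫ Z ◁ (β_ Y X).inv := by
  have := congrArg Iso.inv (yang_baxter_iso Z Y X)
  simpa [braiding_tensor_left_inv, braiding_tensor_right_inv] using this

theorem braiding_inv_tensor_tensor (X₁ X₂ Y₁ Y₂ : C) :
    (β_ (Y₁ ⊗ Y₂) (X₁ ⊗ X₂)).inv =
      tensorδ X₁ Y₁ X₂ Y₂ ≫ ((β_ Y₁ X₁).inv ⊗ₘ (β_ Y₂ X₂).inv) ≫ tensorδ Y₁ Y₂ X₁ X₂ := by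
  simp only [tensorδ, braiding_tensor_left_inv, braiding_tensor_right_inv, tensorHom_def']
  monoidal

theorem tensorμ_comp_braiding_inv (X₁ X₂ Y₁ Y₂ : C) :
    tensorμ X₁ Y₁ X₂ Y₂ ≫ (β_ (Y₁ ⊗ Y₂) (X₁ ⊗ X₂)).inv =
      ((β_ Y₁ X₁).inv ⊗ₘ (β_ Y₂ X₂).inv) ≫ tensorδ Y₁ Y₂ X₁ X₂ := by
  rw [braiding_inv_tensor_tensor, tensorμ_tensorδ_assoc]

/-- The opposite braided coproduct `Δ ≫ β⁻¹` on a comonoid object; the inverse braiding (not `β`) is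
what makes it compatible with products taken in the reverse braided category. -/
abbrev copComonObj (X : C) [ComonObj X] : ComonObj X where
  counit := ε
  comul := Δ ≫ (β_ X X).inv
  counit_comul := by simp [← braiding_inv_naturality_right]
  comul_counit := by simp [← braiding_inv_naturality_left]
  comul_assoc := by
    simp only [comp_whiskerRight, whiskerLeft_comp, Category.assoc]
    rw [← braiding_inv_naturality_right_assoc, ← braiding_inv_naturality_left_assoc,
      braiding_inv_tensor_assoc, comul_assoc_flip_assoc]

theorem mul_comul_braiding_inv (X : C) [BimonObj X] :
    μ[X] ≫ Δ[X] ≫ (β_ X X).inv =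
      ((Δ[X] ≫ (β_ X X).inv) ⊗ₘ (Δ[X] ≫ (β_ X X).inv)) ≫ tensorδ X X X X ≫ (μ[X] ⊗ₘ μ[X]) := by
  rw [BimonObj.mul_comul_assoc, braiding_inv_naturality, reassoc_of% tensorμ_comp_braiding_inv,
    tensorHom_comp_tensorHom_assoc]

theorem one_comul_braiding_inv (X : C) [BimonObj X] :
    η[X] ≫ Δ[X] ≫ (β_ X X).inv = (λ_ (𝟙_ C)).inv ≫ (η[X] ⊗ₘ η[X]) := by
  rw [Bimon.one_comul_assoc, braiding_inv_naturality, braiding_inv_tensorUnit_left]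
  simp [unitors_inv_equal]

theorem comul_braiding_inv_antipode_left (X : C) [HopfObj X] [IsIso 𝒮[X]] :
    (Δ[X] ≫ (β_ X X).inv) ≫ inv 𝒮[X] ▷ X ≫ μ[X] = ε[X] ≫ η[X] := by
  rw [← cancel_mono 𝒮[X]]
  simp only [Category.assoc, HopfObj.mul_antipode, one_antipode]
  rw [MonoidalCategory.tensorHom_def, Category.assoc, ← comp_whiskerRight_assoc, IsIso.inv_hom_id]
  simp [braiding_naturality_right_assoc]

theorem comul_braiding_inv_antipode_right (X : C) [HopfObj X] [IsIso 𝒮[X]] :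
    (Δ[X] ≫ (β_ X X).inv) ≫ X ◁ inv 𝒮[X] ≫ μ[X] = ε[X] ≫ η[X] := by
  rw [← cancel_mono 𝒮[X]]
  simp only [Category.assoc, HopfObj.mul_antipode, one_antipode]
  rw [tensorHom_def', Category.assoc, ← whiskerLeft_comp_assoc, IsIso.inv_hom_id]
  simp [braiding_naturality_left_assoc]

/-- A bimonoid with the opposite coproduct, as a bimonoid for the reverse braiding. The new braided
structure on `C` is passed explicitly because the original one is the instance. -/
abbrev copBimonObj (X : C) [BimonObj X] : @BimonObj C _ _ (reverseBraiding C) X :=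
  @BimonObj.mk C _ _ (reverseBraiding C) X _ (copComonObj X) (mul_comul_braiding_inv X)
    (one_comul_braiding_inv X) (BimonObj.mul_counit X) (BimonObj.one_counit X)

/-- The braided group `X^cop` for the reverse braiding, whose antipode is `𝒮⁻¹`. -/
noncomputable abbrev copHopfObj (X : C) [HopfObj X] [IsIso 𝒮[X]] :
    @HopfObj C _ _ (reverseBraiding C) X :=
  @HopfObj.mk C _ _ (reverseBraiding C) X (copBimonObj X) (inv 𝒮[X])
    (comul_braiding_inv_antipode_left X) (comul_braiding_inv_antipode_right X)

end OppositeBraidedCoproduct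

section TensorAction

variable {R A B C M N P : Type*} [CommSemiring R] [Semiring A] [Algebra R A] [Semiring B]
  [Algebra R B] [Semiring C] [Algebra R C] [AddCommMonoid M] [Module R M] [AddCommMonoid N]
  [Module R N] [AddCommMonoid P] [Module R P]

/-- The external tensor product of two representations, an action of `A ⊗ B` on `M ⊗ N`: a tensor
such as a quasitriangular structure then acts with its two legs on the two factors. -/
noncomputable def tensorAction (ρ : A →ₐ[R] Module.End R M) (σ : B →ₐ[R] Module.End R N) :
    A ⊗[R] B →ₐ[R] Module.End R (M ⊗[R] N) :=
  Module.endTensorEndAlgHom.comp (Algebra.TensorProduct.map ρ σ)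

variable (ρ : A →ₐ[R] Module.End R M) (σ : B →ₐ[R] Module.End R N) (τ : C →ₐ[R] Module.End R P)

@[simp]
theorem tensorAction_tmul (a : A) (b : B) :
    tensorAction ρ σ (a ⊗ₜ b) = TensorProduct.map (ρ a) (σ b) :=
  rfl

theorem tensorAction_comp {A' B' : Type*} [Semiring A'] [Algebra R A'] [Semiring B']
    [Algebra R B'] (f : A' →ₐ[R] A) (g : B' →ₐ[R] B) :
    tensorAction (ρ.comp f) (σ.comp g) =
      (tensorAction ρ σ).comp (Algebra.TensorProduct.map f g) :=
  Algebra.TensorProduct.ext' fun _ _ => rfl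

theorem map_comp_tensorAction {M' N' : Type*} [AddCommMonoid M'] [Module R M'] [AddCommMonoid N']
    [Module R N'] {ρ : A →ₐ[R] Module.End R M} {ρ' : A →ₐ[R] Module.End R M'}
    {σ : B →ₐ[R] Module.End R N} {σ' : B →ₐ[R] Module.End R N'}
    {f : M →ₗ[R] M'} {g : N →ₗ[R] N'} (hf : ∀ a, f ∘ₗ ρ a = ρ' a ∘ₗ f)
    (hg : ∀ b, g ∘ₗ σ b = σ' b ∘ₗ g) (t : A ⊗[R] B) :
    TensorProduct.map f g ∘ₗ tensorAction ρ σ t =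
      tensorAction ρ' σ' t ∘ₗ TensorProduct.map f g := by
  induction t with
  | zero => simp
  | add s t hs ht => simp only [map_add, LinearMap.comp_add, LinearMap.add_comp, hs, ht]
  | tmul a b => simp only [tensorAction_tmul, ← TensorProduct.map_comp, hf, hg]

theorem comm_comp_tensorAction (t : A ⊗[R] B) :
    (TensorProduct.comm R M N).toLinearMap ∘ₗ tensorAction ρ σ t =
      tensorAction σ ρ (TensorProduct.comm R A B t) ∘ₗ (TensorProduct.comm R M N).toLinearMap := by
  induction t with
  | zero => simp
  | add s t hs ht => simp only [map_add, LinearMap.comp_add, LinearMap.add_comp, hs, ht]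
  | tmul a b => exact TensorProduct.ext' fun _ _ => rfl

theorem assoc_comp_tensorAction (t : (A ⊗[R] B) ⊗[R] C) :
    (TensorProduct.assoc R M N P).toLinearMap ∘ₗ tensorAction (tensorAction ρ σ) τ t =
      tensorAction ρ (tensorAction σ τ) (TensorProduct.assoc R A B C t) ∘ₗ
        (TensorProduct.assoc R M N P).toLinearMap := by
  have key : LinearMap.compRight R (TensorProduct.assoc R M N P).toLinearMap ∘ₗ
        (tensorAction (tensorAction ρ σ) τ).toLinearMap =
      LinearMap.lcomp R _ (TensorProduct.assoc R M N P).toLinearMap ∘ₗ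
        (tensorAction ρ (tensorAction σ τ)).toLinearMap ∘ₗ
          (TensorProduct.assoc R A B C).toLinearMap := by
    ext; rfl
  exact congr($key t)

theorem lid_comp_tensorAction (χ : A →ₐ[R] R) (t : A ⊗[R] B) :
    (TensorProduct.lid R N).toLinearMap ∘ₗ
        tensorAction ((Algebra.ofId R (Module.End R R)).comp χ) σ t =
      σ (TensorProduct.lid R B (χ.toLinearMap.rTensor B t)) ∘ₗ
        (TensorProduct.lid R N).toLinearMap := by
  induction t with
  | zero => simp
  | add s t hs ht => simp only [map_add, LinearMap.comp_add, LinearMap.add_comp, hs, ht]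
  | tmul a b => ext; simp

theorem rid_comp_tensorAction (χ : B →ₐ[R] R) (t : A ⊗[R] B) :
    (TensorProduct.rid R M).toLinearMap ∘ₗ
        tensorAction ρ ((Algebra.ofId R (Module.End R R)).comp χ) t =
      ρ (TensorProduct.rid R A (χ.toLinearMap.lTensor A t)) ∘ₗ
        (TensorProduct.rid R M).toLinearMap := by
  induction t with
  | zero => simp
  | add s t hs ht => simp only [map_add, LinearMap.comp_add, LinearMap.add_comp, hs, ht]
  | tmul a b => ext; simp

/-- The flip following the action of `t` on `M ⊗ N`: for `t` a quasitriangular structure this is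
the braiding `Ψ(m ⊗ n) = t⁽²⁾ ▷ n ⊗ t⁽¹⁾ ▷ m` of left modules. -/
noncomputable def braidingMap (t : A ⊗[R] B) : M ⊗[R] N →ₗ[R] N ⊗[R] M :=
  (TensorProduct.comm R M N).toLinearMap ∘ₗ tensorAction ρ σ t

@[simp]
theorem braidingMap_zero : braidingMap ρ σ 0 = 0 := by
  simp [braidingMap]

theorem braidingMap_add (s t : A ⊗[R] B) :
    braidingMap ρ σ (s + t) = braidingMap ρ σ s + braidingMap ρ σ t := by
  simp [braidingMap, LinearMap.comp_add]

@[simp]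
theorem braidingMap_tmul_tmul (a : A) (b : B) (m : M) (n : N) :
    braidingMap ρ σ (a ⊗ₜ b) (m ⊗ₜ n) = σ b n ⊗ₜ ρ a m :=
  rfl

theorem map_comp_braidingMap {M' N' : Type*} [AddCommMonoid M'] [Module R M'] [AddCommMonoid N']
    [Module R N'] {ρ : A →ₐ[R] Module.End R M} {ρ' : A →ₐ[R] Module.End R M'}
    {σ : B →ₐ[R] Module.End R N} {σ' : B →ₐ[R] Module.End R N'}
    {f : M →ₗ[R] M'} {g : N →ₗ[R] N'} (hf : ∀ a, f ∘ₗ ρ a = ρ' a ∘ₗ f)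
    (hg : ∀ b, g ∘ₗ σ b = σ' b ∘ₗ g) (t : A ⊗[R] B) :
    TensorProduct.map g f ∘ₗ braidingMap ρ σ t =
      braidingMap ρ' σ' t ∘ₗ TensorProduct.map f g := by
  rw [braidingMap, braidingMap, LinearMap.comp_assoc, ← map_comp_tensorAction hf hg,
    ← LinearMap.comp_assoc, ← LinearMap.comp_assoc, TensorProduct.map_comp_comm_eq]

theorem tensorAction_lTensor_includeLeft_comp_assoc (t : A ⊗[R] B) :
    tensorAction ρ (tensorAction σ τ) (LinearMap.lTensor A
        (Algebra.TensorProduct.includeLeft : B →ₐ[R] B ⊗[R] C).toLinearMap t) ∘ₗ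
        (TensorProduct.assoc R M N P).toLinearMap =
      (TensorProduct.assoc R M N P).toLinearMap ∘ₗ (tensorAction ρ σ t).rTensor P := by
  induction t with
  | zero => simp
  | add s t hs ht =>
    simp only [map_add, LinearMap.comp_add, LinearMap.add_comp, LinearMap.rTensor_add, hs, ht]
  | tmul a b => ext; simp

theorem assoc_comp_braidingMap_lTensor_includeRight (t : A ⊗[R] C) :
    (TensorProduct.assoc R N P M).toLinearMap ∘ₗ
        braidingMap ρ (tensorAction σ τ) (LinearMap.lTensor A
          (Algebra.TensorProduct.includeRight : C →ₐ[R] B ⊗[R] C).toLinearMap t) ∘ₗ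
        (TensorProduct.assoc R M N P).toLinearMap =
      (braidingMap ρ τ t).lTensor N ∘ₗ (TensorProduct.assoc R N M P).toLinearMap ∘ₗ
        (TensorProduct.comm R M N).toLinearMap.rTensor P := by
  induction t with
  | zero => simp
  | add s t hs ht =>
    simp only [map_add, braidingMap_add, LinearMap.comp_add, LinearMap.add_comp,
      LinearMap.lTensor_add, hs, ht]
  | tmul a b => ext; simp

theorem braidingMap_hexagon_forward (s : A ⊗[R] B) (t : A ⊗[R] C) :
    (TensorProduct.assoc R N P M).toLinearMap ∘ₗ
        braidingMap ρ (tensorAction σ τ)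
          (LinearMap.lTensor A
              (Algebra.TensorProduct.includeRight : C →ₐ[R] B ⊗[R] C).toLinearMap t *
            LinearMap.lTensor A
              (Algebra.TensorProduct.includeLeft : B →ₐ[R] B ⊗[R] C).toLinearMap s) ∘ₗ
        (TensorProduct.assoc R M N P).toLinearMap =
      (braidingMap ρ τ t).lTensor N ∘ₗ (TensorProduct.assoc R N M P).toLinearMap ∘ₗ
        (braidingMap ρ σ s).rTensor P := by
  have hs := tensorAction_lTensor_includeLeft_comp_assoc ρ σ τ s
  have ht := assoc_comp_braidingMap_lTensor_includeRight ρ σ τ t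
  simp only [braidingMap, LinearMap.rTensor_comp, map_mul, Module.End.mul_eq_comp,
    LinearMap.comp_assoc] at ht ⊢
  rw [hs]
  simpa only [LinearMap.comp_assoc, braidingMap] using congr($ht ∘ₗ (tensorAction ρ σ s).rTensor P)

theorem tensorAction_rTensor_includeRight_comp_assoc_symm (t : B ⊗[R] C) :
    tensorAction (tensorAction ρ σ) τ (LinearMap.rTensor C
        (Algebra.TensorProduct.includeRight : B →ₐ[R] A ⊗[R] B).toLinearMap t) ∘ₗ
        (TensorProduct.assoc R M N P).symm.toLinearMap =
      (TensorProduct.assoc R M N P).symm.toLinearMap ∘ₗ (tensorAction σ τ t).lTensor M := by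
  induction t with
  | zero => simp
  | add s t hs ht =>
    simp only [map_add, LinearMap.comp_add, LinearMap.add_comp, LinearMap.lTensor_add, hs, ht]
  | tmul a b => ext; simp

theorem assoc_symm_comp_braidingMap_rTensor_includeLeft (t : A ⊗[R] C) :
    (TensorProduct.assoc R P M N).symm.toLinearMap ∘ₗ
        braidingMap (tensorAction ρ σ) τ (LinearMap.rTensor C
          (Algebra.TensorProduct.includeLeft : A →ₐ[R] A ⊗[R] B).toLinearMap t) ∘ₗ
        (TensorProduct.assoc R M N P).symm.toLinearMap =
      (braidingMap ρ τ t).rTensor N ∘ₗ (TensorProduct.assoc R M P N).symm.toLinearMap ∘ₗ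
        (TensorProduct.comm R N P).toLinearMap.lTensor M := by
  induction t with
  | zero => simp
  | add s t hs ht =>
    simp only [map_add, braidingMap_add, LinearMap.comp_add, LinearMap.add_comp,
      LinearMap.rTensor_add, hs, ht]
  | tmul a b => ext; simp

theorem braidingMap_hexagon_reverse (s : B ⊗[R] C) (t : A ⊗[R] C) :
    (TensorProduct.assoc R P M N).symm.toLinearMap ∘ₗ
        braidingMap (tensorAction ρ σ) τ
          (LinearMap.rTensor C
              (Algebra.TensorProduct.includeLeft : A →ₐ[R] A ⊗[R] B).toLinearMap t *
            LinearMap.rTensor C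
              (Algebra.TensorProduct.includeRight : B →ₐ[R] A ⊗[R] B).toLinearMap s) ∘ₗ
        (TensorProduct.assoc R M N P).symm.toLinearMap =
      (braidingMap ρ τ t).rTensor N ∘ₗ (TensorProduct.assoc R M P N).symm.toLinearMap ∘ₗ
        (braidingMap σ τ s).lTensor M := by
  have hs := tensorAction_rTensor_includeRight_comp_assoc_symm ρ σ τ s
  have ht := assoc_symm_comp_braidingMap_rTensor_includeLeft ρ σ τ t
  simp only [braidingMap, LinearMap.lTensor_comp, map_mul, Module.End.mul_eq_comp,
    LinearMap.comp_assoc] at ht ⊢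
  rw [hs]
  simpa only [LinearMap.comp_assoc, braidingMap] using congr($ht ∘ₗ (tensorAction σ τ s).lTensor M)

end TensorAction

section BialgModule

open CategoryTheory MonoidalCategory

universe u v

/-- Left modules over an `R`-bialgebra `A`, with the action bundled as an algebra map so that the
one carrier can hold its `R`-module structure as an instance. They form a monoidal category under
`⊗[R]`, in which a braided group is a Hopf monoid. -/
structure BialgModule (R : Type u) (A : Type v) [CommSemiring R] [Semiring A]
    [Bialgebra R A] where
  carrier : Type u
  [addCommMonoid : AddCommMonoid carrier]
  [module : Module R carrier]
  action : A →ₐ[R] Module.End R carrier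

namespace BialgModule

attribute [instance] addCommMonoid module

variable {R : Type u} {A : Type v} [CommSemiring R] [Semiring A] [Bialgebra R A]

/-- Maps of `A`-modules: `R`-linear maps commuting with the actions of `A`. -/
@[ext]
structure Hom (X Y : BialgModule R A) where
  toLinearMap : X.carrier →ₗ[R] Y.carrier
  comp_action (a : A) : toLinearMap ∘ₗ X.action a = Y.action a ∘ₗ toLinearMap

instance : Category (BialgModule R A) where
  Hom := Hom
  id X := ⟨LinearMap.id, fun _ => rfl⟩
  comp f g := ⟨g.toLinearMap ∘ₗ f.toLinearMap, fun a => by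
    rw [LinearMap.comp_assoc, f.comp_action, ← LinearMap.comp_assoc, g.comp_action,
      LinearMap.comp_assoc]⟩

variable {X Y : BialgModule R A}

theorem hom_ext {f g : X ⟶ Y} (h : f.toLinearMap = g.toLinearMap) : f = g :=
  Hom.ext h

/-- The isomorphism of `A`-modules given by an equivariant linear equivalence. -/
def isoOfLinearEquiv (e : X.carrier ≃ₗ[R] Y.carrier)
    (he : ∀ a, e.toLinearMap ∘ₗ X.action a = Y.action a ∘ₗ e.toLinearMap) : X ≅ Y where
  hom := ⟨e.toLinearMap, he⟩
  inv := ⟨e.symm.toLinearMap, fun a => by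
    rw [LinearEquiv.toLinearMap_symm_comp_eq, ← LinearMap.comp_assoc, he, LinearMap.comp_assoc,
      e.comp_symm, LinearMap.comp_id]⟩
  hom_inv_id := hom_ext e.symm_comp
  inv_hom_id := hom_ext e.comp_symm

section

variable {M N P : Type*} [AddCommMonoid M] [Module R M] [AddCommMonoid N] [Module R N]
  [AddCommMonoid P] [Module R P] (ρ : A →ₐ[R] Module.End R M) (σ : A →ₐ[R] Module.End R N)
  (τ : A →ₐ[R] Module.End R P)

theorem tensorAction_comp_comulAlgHom_left (t : A ⊗[R] A) :
    tensorAction ((tensorAction ρ σ).comp (Bialgebra.comulAlgHom R A)) τ t =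
      tensorAction (tensorAction ρ σ) τ ((Coalgebra.comul (R := R)).rTensor A t) :=
  congr($(tensorAction_comp (tensorAction ρ σ) τ (Bialgebra.comulAlgHom R A) (AlgHom.id R A)) t)

theorem tensorAction_comp_comulAlgHom_right (t : A ⊗[R] A) :
    tensorAction ρ ((tensorAction σ τ).comp (Bialgebra.comulAlgHom R A)) t =
      tensorAction ρ (tensorAction σ τ) ((Coalgebra.comul (R := R)).lTensor A t) :=
  congr($(tensorAction_comp ρ (tensorAction σ τ) (AlgHom.id R A) (Bialgebra.comulAlgHom R A)) t)

theorem assoc_comp_tensorAction_comul (a : A) :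
    (TensorProduct.assoc R M N P).toLinearMap ∘ₗ
        tensorAction ((tensorAction ρ σ).comp (Bialgebra.comulAlgHom R A)) τ
          (Coalgebra.comul (R := R) a) =
      tensorAction ρ ((tensorAction σ τ).comp (Bialgebra.comulAlgHom R A))
          (Coalgebra.comul (R := R) a) ∘ₗ
        (TensorProduct.assoc R M N P).toLinearMap := by
  rw [tensorAction_comp_comulAlgHom_left, tensorAction_comp_comulAlgHom_right,
    assoc_comp_tensorAction, Coalgebra.coassoc_apply]

theorem lid_comp_tensorAction_comul (a : A) :
    (TensorProduct.lid R M).toLinearMap ∘ₗ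
        tensorAction ((Algebra.ofId R (Module.End R R)).comp (Bialgebra.counitAlgHom R A)) ρ
          (Coalgebra.comul (R := R) a) =
      ρ a ∘ₗ (TensorProduct.lid R M).toLinearMap := by
  rw [lid_comp_tensorAction, Bialgebra.toLinearMap_counitAlgHom, Coalgebra.rTensor_counit_comul,
    TensorProduct.lid_tmul, one_smul]

theorem rid_comp_tensorAction_comul (a : A) :
    (TensorProduct.rid R M).toLinearMap ∘ₗ
        tensorAction ρ ((Algebra.ofId R (Module.End R R)).comp (Bialgebra.counitAlgHom R A))
          (Coalgebra.comul (R := R) a) =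
      ρ a ∘ₗ (TensorProduct.rid R M).toLinearMap := by
  rw [rid_comp_tensorAction, Bialgebra.toLinearMap_counitAlgHom, Coalgebra.lTensor_counit_comul,
    TensorProduct.rid_tmul, one_smul]

end

noncomputable instance : MonoidalCategoryStruct (BialgModule R A) where
  tensorObj X Y :=
    ⟨X.carrier ⊗[R] Y.carrier, (tensorAction X.action Y.action).comp (Bialgebra.comulAlgHom R A)⟩
  tensorUnit := ⟨R, (Algebra.ofId R (Module.End R R)).comp (Bialgebra.counitAlgHom R A)⟩
  tensorHom f g := ⟨TensorProduct.map f.toLinearMap g.toLinearMap, fun _ =>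
    map_comp_tensorAction f.comp_action g.comp_action _⟩
  whiskerLeft _ _ _ g := ⟨TensorProduct.map LinearMap.id g.toLinearMap, fun _ =>
    map_comp_tensorAction (fun _ => rfl) g.comp_action _⟩
  whiskerRight f _ := ⟨TensorProduct.map f.toLinearMap LinearMap.id, fun _ =>
    map_comp_tensorAction f.comp_action (fun _ => rfl) _⟩
  associator X Y Z := isoOfLinearEquiv (TensorProduct.assoc R X.carrier Y.carrier Z.carrier)
    (assoc_comp_tensorAction_comul X.action Y.action Z.action)
  leftUnitor X := isoOfLinearEquiv (TensorProduct.lid R X.carrier)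
    (lid_comp_tensorAction_comul X.action)
  rightUnitor X := isoOfLinearEquiv (TensorProduct.rid R X.carrier)
    (rid_comp_tensorAction_comul X.action)

noncomputable instance : MonoidalCategory (BialgModule R A) where
  tensorHom_def _ _ := hom_ext (TensorProduct.ext' fun _ _ => rfl)
  id_tensorHom_id _ _ := hom_ext (TensorProduct.ext' fun _ _ => rfl)
  tensorHom_comp_tensorHom _ _ _ _ := hom_ext (TensorProduct.ext' fun _ _ => rfl)
  whiskerLeft_id _ _ := hom_ext (TensorProduct.ext' fun _ _ => rfl)
  id_whiskerRight _ _ := hom_ext (TensorProduct.ext' fun _ _ => rfl)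
  associator_naturality _ _ _ := hom_ext (TensorProduct.ext_threefold fun _ _ _ => rfl)
  leftUnitor_naturality f :=
    hom_ext (TensorProduct.ext' fun r x => (f.toLinearMap.map_smul r x).symm)
  rightUnitor_naturality f :=
    hom_ext (TensorProduct.ext' fun x r => (f.toLinearMap.map_smul r x).symm)
  pentagon _ _ _ _ := hom_ext (TensorProduct.ext_fourfold fun _ _ _ _ => rfl)
  triangle _ _ := hom_ext (TensorProduct.ext_threefold fun x r y =>
    (TensorProduct.smul_tmul (R := R) (show R from r) x y).symm)

end BialgModule
end BialgModule

section QuasitriangularBraiding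

open CategoryTheory MonoidalCategory

variable {k H} {R Rinv : H ⊗[k] H}

namespace IsQT

section

variable {M N P : Type*} [AddCommMonoid M] [Module k M] [AddCommMonoid N] [Module k N]
  [AddCommMonoid P] [Module k P]
  (hQT : IsQT k H R Rinv) (ρ : H →ₐ[k] Module.End k M) (σ : H →ₐ[k] Module.End k N)
  (τ : H →ₐ[k] Module.End k P)

include hQT

theorem braidingMap_comp_tensorAction_comul (h : H) :
    braidingMap ρ σ R ∘ₗ tensorAction ρ σ (Coalgebra.comul (R := k) h) =
      tensorAction σ ρ (Coalgebra.comul (R := k) h) ∘ₗ braidingMap ρ σ R := by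
  rw [braidingMap, LinearMap.comp_assoc, ← Module.End.mul_eq_comp, ← map_mul, ← hQT.quasi_comm,
    map_mul, Module.End.mul_eq_comp, ← LinearMap.comp_assoc, comm_comp_tensorAction,
    LinearMap.comp_assoc]
  simp

theorem braidingMap_hexagon_forward :
    (TensorProduct.assoc k N P M).toLinearMap ∘ₗ
        braidingMap ρ ((tensorAction σ τ).comp (Bialgebra.comulAlgHom k H)) R ∘ₗ
        (TensorProduct.assoc k M N P).toLinearMap =
      (braidingMap ρ τ R).lTensor N ∘ₗ (TensorProduct.assoc k N M P).toLinearMap ∘ₗ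
        (braidingMap ρ σ R).rTensor P := by
  rw [← DBos.braidingMap_hexagon_forward, ← hQT.comul_snd, braidingMap,
    BialgModule.tensorAction_comp_comulAlgHom_right]
  rfl

theorem braidingMap_hexagon_reverse :
    (TensorProduct.assoc k P M N).symm.toLinearMap ∘ₗ
        braidingMap ((tensorAction ρ σ).comp (Bialgebra.comulAlgHom k H)) τ R ∘ₗ
        (TensorProduct.assoc k M N P).symm.toLinearMap =
      (braidingMap ρ τ R).rTensor N ∘ₗ (TensorProduct.assoc k M P N).symm.toLinearMap ∘ₗ
        (braidingMap σ τ R).lTensor M := by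
  rw [← DBos.braidingMap_hexagon_reverse, ← hQT.comul_fst, braidingMap,
    BialgModule.tensorAction_comp_comulAlgHom_left]
  rfl

/-- The braiding of left modules as a linear equivalence; its inverse is the action of `R⁻¹`
following the flip. -/
noncomputable def braidingEquiv : M ⊗[k] N ≃ₗ[k] N ⊗[k] M :=
  LinearEquiv.ofLinearMap (tensorAction ρ σ R) (tensorAction ρ σ Rinv)
    (by rw [← Module.End.mul_eq_comp, ← map_mul, hQT.mul_inv, map_one, Module.End.one_eq_id])
    (by rw [← Module.End.mul_eq_comp, ← map_mul, hQT.inv_mul, map_one, Module.End.one_eq_id])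
    ≪≫ₗ TensorProduct.comm k M N

theorem toLinearMap_braidingEquiv :
    (hQT.braidingEquiv ρ σ).toLinearMap = braidingMap ρ σ R :=
  rfl

theorem toLinearMap_braidingEquiv_symm :
    (hQT.braidingEquiv ρ σ).symm.toLinearMap =
      braidingMap σ ρ (TensorProduct.comm k H H Rinv) := by
  rw [braidingMap, comm_comp_tensorAction, TensorProduct.comm_comm]
  rfl

end

/-- The braided category of left `H`-modules determined by a quasitriangular structure. -/
noncomputable abbrev braidedCategory (hQT : IsQT k H R Rinv) :
    BraidedCategory (BialgModule k H) where
  braiding X Y := BialgModule.isoOfLinearEquiv (X := X ⊗ Y) (Y := Y ⊗ X)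
    (hQT.braidingEquiv X.action Y.action)
    (hQT.braidingMap_comp_tensorAction_comul X.action Y.action)
  braiding_naturality_right X _ _ f :=
    BialgModule.hom_ext (map_comp_braidingMap (𝟙 X : X ⟶ X).comp_action f.comp_action R).symm
  braiding_naturality_left f Z :=
    BialgModule.hom_ext (map_comp_braidingMap f.comp_action (𝟙 Z : Z ⟶ Z).comp_action R).symm
  hexagon_forward X Y Z := BialgModule.hom_ext (
    hQT.braidingMap_hexagon_forward X.action Y.action Z.action)
  hexagon_reverse X Y Z := BialgModule.hom_ext (
    hQT.braidingMap_hexagon_reverse X.action Y.action Z.action)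

end IsQT

end QuasitriangularBraiding

section SweedlerForms

variable {R M N P Q W : Type*} [CommSemiring R] [AddCommMonoid M] [Module R M] [AddCommMonoid N]
  [Module R N] [AddCommMonoid P] [Module R P] [AddCommMonoid Q] [Module R Q] [AddCommMonoid W]
  [Module R W]

theorem forall_eq_sum_tmul_iff (t : M ⊗[R] N) (f : M ⊗[R] N →ₗ[R] W) (w : W) :
    (∀ (ι : Type) [Fintype ι] (m : ι → M) (n : ι → N), t = ∑ i, m i ⊗ₜ[R] n i →
      w = ∑ i, f (m i ⊗ₜ n i)) ↔ w = f t := by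
  constructor
  · intro h
    obtain ⟨n, x, y, hxy⟩ := TensorProduct.exists_sum_tmul_eq t
    rw [h _ x y hxy, hxy, map_sum]
  · rintro rfl ι _ m n rfl
    exact map_sum f _ _

/-- The interchange `(M ⊗ N) ⊗ (P ⊗ Q) → (M ⊗ P) ⊗ (N ⊗ Q)` along a map `b` in place of the flip of
the middle factors, associated as in `CategoryTheory.MonoidalCategory.tensorμ`. -/
noncomputable def tensorInterchange (b : N ⊗[R] P →ₗ[R] P ⊗[R] N) :
    (M ⊗[R] N) ⊗[R] (P ⊗[R] Q) →ₗ[R] (M ⊗[R] P) ⊗[R] (N ⊗[R] Q) :=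
  (TensorProduct.assoc R M P (N ⊗[R] Q)).symm.toLinearMap ∘ₗ
    (TensorProduct.assoc R P N Q).toLinearMap.lTensor M ∘ₗ
    (b.rTensor Q).lTensor M ∘ₗ
    (TensorProduct.assoc R N P Q).symm.toLinearMap.lTensor M ∘ₗ
    (TensorProduct.assoc R M N (P ⊗[R] Q)).toLinearMap

section

variable {A D : Type*} [Semiring A] [Algebra R A] [Semiring D] [Algebra R D]
  (ρ : A →ₐ[R] Module.End R D)

theorem map_mul'_tensorInterchange_sum {ι κ σ : Type*} [Fintype ι] [Fintype κ] [Fintype σ]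
    (c₁ c₂ : ι → D) (d₁ d₂ : κ → D) (r₁ r₂ : σ → A) :
    TensorProduct.map (LinearMap.mul' R D) (LinearMap.mul' R D)
      (tensorInterchange (braidingMap ρ ρ (∑ r, r₁ r ⊗ₜ r₂ r))
        ((∑ i, c₁ i ⊗ₜ c₂ i) ⊗ₜ (∑ j, d₁ j ⊗ₜ d₂ j))) =
    ∑ i, ∑ j, ∑ r, (c₁ i * ρ (r₂ r) (d₁ j)) ⊗ₜ[R] (ρ (r₁ r) (c₂ i) * d₂ j) := by
  simp only [tensorInterchange, braidingMap, TensorProduct.sum_tmul, TensorProduct.tmul_sum,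
    map_sum, tensorAction_tmul, LinearMap.comp_apply, LinearMap.sum_apply, LinearEquiv.coe_coe,
    TensorProduct.assoc_tmul, TensorProduct.assoc_symm_tmul, LinearMap.lTensor_tmul,
    LinearMap.rTensor_tmul, TensorProduct.map_tmul, TensorProduct.comm_tmul, LinearMap.mul'_apply]
  exact Finset.sum_comm

theorem forall_eq_sum_tmul_mul_iff (t u : D ⊗[R] D) (s : A ⊗[R] A) (w : D ⊗[R] D) :
    (∀ (ι : Type) [Fintype ι] (c₁ c₂ : ι → D) (κ : Type) [Fintype κ] (d₁ d₂ : κ → D)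
      (σ : Type) [Fintype σ] (r₁ r₂ : σ → A),
      t = ∑ i, c₁ i ⊗ₜ[R] c₂ i → u = ∑ j, d₁ j ⊗ₜ[R] d₂ j → s = ∑ r, r₁ r ⊗ₜ[R] r₂ r →
      w = ∑ i, ∑ j, ∑ r, (c₁ i * ρ (r₂ r) (d₁ j)) ⊗ₜ[R] (ρ (r₁ r) (c₂ i) * d₂ j)) ↔
    w = TensorProduct.map (LinearMap.mul' R D) (LinearMap.mul' R D)
      (tensorInterchange (braidingMap ρ ρ s) (t ⊗ₜ u)) := by
  constructor
  · intro h
    obtain ⟨_, c₁, c₂, hc⟩ := TensorProduct.exists_sum_tmul_eq t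
    obtain ⟨_, d₁, d₂, hd⟩ := TensorProduct.exists_sum_tmul_eq u
    obtain ⟨_, r₁, r₂, hr⟩ := TensorProduct.exists_sum_tmul_eq s
    rw [h _ c₁ c₂ _ d₁ d₂ _ r₁ r₂ hc hd hr, hc, hd, hr, map_mul'_tensorInterchange_sum]
  · rintro rfl ι _ c₁ c₂ κ _ d₁ d₂ σ _ r₁ r₂ rfl rfl rfl
    exact map_mul'_tensorInterchange_sum ρ c₁ c₂ d₁ d₂ r₁ r₂

theorem forall_eq_sum_tmul_tensorAction_iff (t : D ⊗[R] D) (s : A ⊗[R] A) (w : D ⊗[R] D) :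
    (∀ (ι : Type) [Fintype ι] (c₁ c₂ : ι → D) (κ : Type) [Fintype κ] (a₁ a₂ : κ → A),
      t = ∑ i, c₁ i ⊗ₜ[R] c₂ i → s = ∑ j, a₁ j ⊗ₜ[R] a₂ j →
      w = ∑ i, ∑ j, ρ (a₁ j) (c₁ i) ⊗ₜ[R] ρ (a₂ j) (c₂ i)) ↔
    w = tensorAction ρ ρ s t := by
  have expand {ι κ : Type} [Fintype ι] [Fintype κ] (c₁ c₂ : ι → D) (a₁ a₂ : κ → A) :
      tensorAction ρ ρ (∑ j, a₁ j ⊗ₜ a₂ j) (∑ i, c₁ i ⊗ₜ c₂ i) =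
        ∑ i, ∑ j, ρ (a₁ j) (c₁ i) ⊗ₜ[R] ρ (a₂ j) (c₂ i) := by
    simp
  constructor
  · intro h
    obtain ⟨_, c₁, c₂, hc⟩ := TensorProduct.exists_sum_tmul_eq t
    obtain ⟨_, a₁, a₂, ha⟩ := TensorProduct.exists_sum_tmul_eq s
    rw [h _ c₁ c₂ _ a₁ a₂ hc ha, hc, ha, expand]
  · rintro rfl ι _ c₁ c₂ κ _ a₁ a₂ rfl rfl
    exact expand c₁ c₂ a₁ a₂

end

end SweedlerForms

section BraidedGroups

open CategoryTheory MonoidalCategory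
open scoped MonObj ComonObj HopfObj

variable {k H D} {R : H ⊗[k] H} {act : H →ₗ[k] D →ₗ[k] D} {cm : D →ₗ[k] D ⊗[k] D}
  {cu : D →ₗ[k] k} {S : D →ₗ[k] D}

namespace IsModAlgL

/-- The object of the category of `H`-modules underlying an `H`-module algebra. -/
abbrev toModule (h : IsModAlgL k H D act) : BialgModule k H where
  carrier := D
  action := AlgHom.ofLinearMap act (LinearMap.ext h.one_act)
    fun x y => LinearMap.ext fun c => (h.act_act x y c).symm

theorem mul'_comp_action (h : IsModAlgL k H D act) (a : H) :
    LinearMap.mul' k D ∘ₗ (h.toModule ⊗ h.toModule).action a =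
      h.toModule.action a ∘ₗ LinearMap.mul' k D := by
  refine TensorProduct.ext' fun c c' => ?_
  let f : H ⊗[k] H →ₗ[k] D := LinearMap.mul' k D ∘ₗ LinearMap.applyₗ (c ⊗ₜ c') ∘ₗ
    (tensorAction h.toModule.action h.toModule.action).toLinearMap
  exact ((forall_eq_sum_tmul_iff (Coalgebra.comul (R := k) a) f (act a (c * c'))).1
    fun _ _ a₁ a₂ ha => h.act_mul a _ a₁ a₂ ha c c').symm

theorem linearMap_comp_action (h : IsModAlgL k H D act) (a : H) :
    Algebra.linearMap k D ∘ₗ (𝟙_ (BialgModule k H)).action a =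
      h.toModule.action a ∘ₗ Algebra.linearMap k D := by
  refine LinearMap.ext_ring ?_
  change algebraMap k D (Coalgebra.counit (R := k) a * 1) = act a (algebraMap k D 1)
  rw [mul_one, map_one, h.act_one, Algebra.algebraMap_eq_smul_one]

/-- An `H`-module algebra as a monoid object. -/
noncomputable abbrev monObj (h : IsModAlgL k H D act) : MonObj h.toModule where
  one := ⟨Algebra.linearMap k D, h.linearMap_comp_action⟩
  mul := ⟨LinearMap.mul' k D, h.mul'_comp_action⟩
  one_mul := BialgModule.hom_ext (TensorProduct.ext' fun r x => (Algebra.smul_def r x).symm)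
  mul_one := BialgModule.hom_ext (TensorProduct.ext' fun x r =>
    (Algebra.commutes r x).symm.trans (Algebra.smul_def r x).symm)
  mul_assoc := BialgModule.hom_ext (TensorProduct.ext_threefold fun x y z => mul_assoc x y z)

end IsModAlgL

namespace IsBraidedGroupL

theorem comul_comp_action (h : IsBraidedGroupL k H R D act cm cu S) (a : H) :
    cm ∘ₗ h.modAlg.toModule.action a =
      (h.modAlg.toModule ⊗ h.modAlg.toModule).action a ∘ₗ cm :=
  LinearMap.ext fun c => (forall_eq_sum_tmul_tensorAction_iff h.modAlg.toModule.action _ _ _).1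
    (h.cm_act c a)

theorem comul_comp_mul' (h : IsBraidedGroupL k H R D act cm cu S) :
    cm ∘ₗ LinearMap.mul' k D =
      TensorProduct.map (LinearMap.mul' k D) (LinearMap.mul' k D) ∘ₗ
        tensorInterchange (braidingMap h.modAlg.toModule.action h.modAlg.toModule.action R) ∘ₗ
        TensorProduct.map cm cm :=
  TensorProduct.ext' fun c c' =>
    (forall_eq_sum_tmul_mul_iff h.modAlg.toModule.action _ _ _ _).1 (h.cm_mul c c')

theorem mul'_comp_rTensor_antipode_comp_comul (h : IsBraidedGroupL k H R D act cm cu S) :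
    LinearMap.mul' k D ∘ₗ S.rTensor D ∘ₗ cm = Algebra.linearMap k D ∘ₗ cu := by
  refine LinearMap.ext fun c => Eq.symm ?_
  refine (Algebra.algebraMap_eq_smul_one (cu c)).trans
    ((forall_eq_sum_tmul_iff (cm c) (LinearMap.mul' k D ∘ₗ S.rTensor D) _).1 ?_)
  exact fun _ _ c₁ c₂ hc => (h.antipode_left c _ c₁ c₂ hc).symm

theorem mul'_comp_lTensor_antipode_comp_comul (h : IsBraidedGroupL k H R D act cm cu S) :
    LinearMap.mul' k D ∘ₗ S.lTensor D ∘ₗ cm = Algebra.linearMap k D ∘ₗ cu := by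
  refine LinearMap.ext fun c => Eq.symm ?_
  refine (Algebra.algebraMap_eq_smul_one (cu c)).trans
    ((forall_eq_sum_tmul_iff (cm c) (LinearMap.mul' k D ∘ₗ S.lTensor D) _).1 ?_)
  exact fun _ _ c₁ c₂ hc => (h.antipode_right c _ c₁ c₂ hc).symm

/-- The coalgebra underlying a braided group, as a comonoid object of the category of
`H`-modules. -/
noncomputable abbrev comonObj (h : IsBraidedGroupL k H R D act cm cu S) :
    ComonObj h.modAlg.toModule where
  counit := ⟨cu, fun a => LinearMap.ext (h.cu_act a)⟩
  comul := ⟨cm, h.comul_comp_action⟩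
  counit_comul := BialgModule.hom_ext
    ((LinearEquiv.eq_toLinearMap_symm_comp _ _).2 h.counit_left)
  comul_counit := BialgModule.hom_ext
    ((LinearEquiv.eq_toLinearMap_symm_comp _ _).2 h.counit_right)
  comul_assoc := BialgModule.hom_ext h.coassoc.symm

variable [BraidedCategory (BialgModule k H)]

/-- A braided group as a bimonoid object, for any braiding of the category of `H`-modules whose
component at `D` is given by `R`. -/
noncomputable abbrev bimonObj (h : IsBraidedGroupL k H R D act cm cu S)
    (hβ : (β_ h.modAlg.toModule h.modAlg.toModule).hom.toLinearMap =
      braidingMap h.modAlg.toModule.action h.modAlg.toModule.action R) :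
    BimonObj h.modAlg.toModule where
  toMonObj := h.modAlg.monObj
  toComonObj := h.comonObj
  mul_comul := BialgModule.hom_ext (by
    refine h.comul_comp_mul'.trans ?_
    rw [← hβ]
    rfl)
  one_comul := BialgModule.hom_ext (LinearMap.ext_ring (by
    change cm (algebraMap k D 1) = algebraMap k D 1 ⊗ₜ algebraMap k D 1
    rw [map_one, h.cm_one]))
  mul_counit := BialgModule.hom_ext (TensorProduct.ext' h.cu_mul)
  one_counit := BialgModule.hom_ext (LinearMap.ext_ring (by
    change cu (algebraMap k D 1) = 1
    rw [map_one, h.cu_one]))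

/-- A braided group as a Hopf monoid object, which is how it enters the categorical argument. -/
noncomputable abbrev hopfObj (h : IsBraidedGroupL k H R D act cm cu S)
    (hβ : (β_ h.modAlg.toModule h.modAlg.toModule).hom.toLinearMap =
      braidingMap h.modAlg.toModule.action h.modAlg.toModule.action R) :
    HopfObj h.modAlg.toModule where
  toBimonObj := h.bimonObj hβ
  antipode := ⟨S, fun a => LinearMap.ext (h.antipode_act a)⟩
  antipode_left := BialgModule.hom_ext h.mul'_comp_rTensor_antipode_comp_comul
  antipode_right := BialgModule.hom_ext h.mul'_comp_lTensor_antipode_comp_comul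

end IsBraidedGroupL

namespace IsModAlgL

variable (h : IsModAlgL k H D act)

theorem isBraidedGroupL_of_comp_eq
    (coassoc : (TensorProduct.assoc k D D D).toLinearMap ∘ₗ cm.rTensor D ∘ₗ cm =
      cm.lTensor D ∘ₗ cm)
    (counit_left : (TensorProduct.lid k D).toLinearMap ∘ₗ cu.rTensor D ∘ₗ cm = LinearMap.id)
    (counit_right : (TensorProduct.rid k D).toLinearMap ∘ₗ cu.lTensor D ∘ₗ cm = LinearMap.id)
    (counit_one : cu ∘ₗ Algebra.linearMap k D = LinearMap.id)
    (counit_mul : cu ∘ₗ LinearMap.mul' k D =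
      (TensorProduct.lid k k).toLinearMap ∘ₗ TensorProduct.map cu cu)
    (counit_action : ∀ a, cu ∘ₗ h.toModule.action a = (𝟙_ (BialgModule k H)).action a ∘ₗ cu)
    (comul_one : cm ∘ₗ Algebra.linearMap k D = TensorProduct.map (Algebra.linearMap k D)
      (Algebra.linearMap k D) ∘ₗ (TensorProduct.lid k k).symm.toLinearMap)
    (comul_mul : cm ∘ₗ LinearMap.mul' k D =
      TensorProduct.map (LinearMap.mul' k D) (LinearMap.mul' k D) ∘ₗ
        tensorInterchange (braidingMap h.toModule.action h.toModule.action R) ∘ₗ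
        TensorProduct.map cm cm)
    (comul_action : ∀ a,
      cm ∘ₗ h.toModule.action a = (h.toModule ⊗ h.toModule).action a ∘ₗ cm)
    (antipode_left : LinearMap.mul' k D ∘ₗ S.rTensor D ∘ₗ cm = Algebra.linearMap k D ∘ₗ cu)
    (antipode_right : LinearMap.mul' k D ∘ₗ S.lTensor D ∘ₗ cm = Algebra.linearMap k D ∘ₗ cu)
    (antipode_action : ∀ a, S ∘ₗ h.toModule.action a = h.toModule.action a ∘ₗ S) :
    IsBraidedGroupL k H R D act cm cu S where
  modAlg := h
  coassoc := coassoc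
  counit_left := counit_left
  counit_right := counit_right
  cu_one := by simpa using congr($counit_one 1)
  cu_mul c c' := by simpa using congr($counit_mul (c ⊗ₜ c'))
  cu_act a c := congr($(counit_action a) c)
  cm_one := by simpa using congr($comul_one 1)
  cm_act c a := (forall_eq_sum_tmul_tensorAction_iff h.toModule.action _ _ _).2
    congr($(comul_action a) c)
  cm_mul c c' := (forall_eq_sum_tmul_mul_iff h.toModule.action _ _ _ _).2
    congr($comul_mul (c ⊗ₜ c'))
  antipode_left c _ _ c₁ c₂ hc := by
    simpa [hc, Algebra.algebraMap_eq_smul_one] using congr($antipode_left c)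
  antipode_right c _ _ c₁ c₂ hc := by
    simpa [hc, Algebra.algebraMap_eq_smul_one] using congr($antipode_right c)
  antipode_act a c := congr($(antipode_action a) c)

theorem isBraidedGroupL_of_hopfObj [BraidedCategory (BialgModule k H)]
    (hβ : (β_ h.toModule h.toModule).hom.toLinearMap =
      braidingMap h.toModule.action h.toModule.action R)
    [HopfObj h.toModule] (hη : η[h.toModule].toLinearMap = Algebra.linearMap k D)
    (hμ : μ[h.toModule].toLinearMap = LinearMap.mul' k D) :
    IsBraidedGroupL k H R D act Δ[h.toModule].toLinearMap ε[h.toModule].toLinearMap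
      𝒮[h.toModule].toLinearMap := by
  refine h.isBraidedGroupL_of_comp_eq congr($(ComonObj.comul_assoc h.toModule).toLinearMap).symm
    ((LinearEquiv.eq_toLinearMap_symm_comp _ _).1
      congr($(ComonObj.counit_comul h.toModule).toLinearMap))
    ((LinearEquiv.eq_toLinearMap_symm_comp _ _).1
      congr($(ComonObj.comul_counit h.toModule).toLinearMap)) ?_ ?_ ε[h.toModule].comp_action
    ?_ ?_ Δ[h.toModule].comp_action ?_ ?_ 𝒮[h.toModule].comp_action <;>
  simp only [← hη, ← hμ, ← hβ]
  · exact congr($(BimonObj.one_counit h.toModule).toLinearMap)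
  · exact congr($(BimonObj.mul_counit h.toModule).toLinearMap)
  · exact congr($(BimonObj.one_comul h.toModule).toLinearMap)
  · exact congr($(BimonObj.mul_comul h.toModule).toLinearMap)
  · exact congr($(HopfObj.antipode_left h.toModule).toLinearMap)
  · exact congr($(HopfObj.antipode_right h.toModule).toLinearMap)

theorem braidLinv_eq_tensorAction_comp_comm (t : H ⊗[k] H) :
    braidLinv k H D t act =
      tensorAction h.toModule.action h.toModule.action t ∘ₗ
        (TensorProduct.comm k D D).toLinearMap := by
  refine TensorProduct.ext' fun c d => ?_
  induction t with
  | zero => simp [braidLinv]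
  | add s t hs ht =>
    simp only [braidLinv, LinearMap.comp_apply, map_add, LinearMap.add_apply] at hs ht ⊢
    rw [hs, ht]
  | tmul a b => rfl

end IsModAlgL

theorem IsBraidedGroupL.braiding_inv_comp [BraidedCategory (BialgModule k H)]
    (h : IsBraidedGroupL k H R D act cm cu S) {R' : H ⊗[k] H} {Sinv : D →ₗ[k] D}
    (hβ : (β_ h.modAlg.toModule h.modAlg.toModule).hom.toLinearMap =
      braidingMap h.modAlg.toModule.action h.modAlg.toModule.action R)
    (hβinv : (β_ h.modAlg.toModule h.modAlg.toModule).inv.toLinearMap =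
      braidingMap h.modAlg.toModule.action h.modAlg.toModule.action R')
    (hS₁ : S ∘ₗ Sinv = LinearMap.id) (hS₂ : Sinv ∘ₗ S = LinearMap.id) :
    IsBraidedGroupL k H R' D act
      ((β_ h.modAlg.toModule h.modAlg.toModule).inv.toLinearMap ∘ₗ cm) cu Sinv := by
  let X := h.modAlg.toModule
  let : HopfObj X := h.hopfObj hβ
  let e : X ≅ X := BialgModule.isoOfLinearEquiv (LinearEquiv.ofLinearMap S Sinv hS₁ hS₂)
    fun a => LinearMap.ext (h.antipode_act a)
  have : IsIso 𝒮[X] := inferInstanceAs (IsIso e.hom)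
  have inv_antipode : (inv 𝒮[X]).toLinearMap = Sinv := congr($(IsIso.Iso.inv_hom e).toLinearMap)
  rw [← inv_antipode]
  exact @IsModAlgL.isBraidedGroupL_of_hopfObj k _ H _ _ D _ _ _ act h.modAlg
    (reverseBraiding _) hβinv (copHopfObj X) rfl rfl

end BraidedGroups

/-- Lemma 3.1.  Let `H` be a quasitriangular Hopf algebra over a
field `k` and `D` a braided group in the braided category of left `H`-modules with
invertible braided antipode `S̲`.  Then `D^{cop̲}` — the same algebra, unit and
counit, with the opposite braided coproduct `Ψ⁻¹ ∘ Δ̲` and antipode `S̲⁻¹` — is a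
braided group in the braided category of left modules over `H̄`, where `H̄` is `H`
with the quasitriangular structure `𝓡̄ = 𝓡₂₁⁻¹ = τ(𝓡⁻¹)`. -/
theorem double_bosonisation_stmt0
    (R Rinv : H ⊗[k] H)
    (act : H →ₗ[k] D →ₗ[k] D) (cm : D →ₗ[k] D ⊗[k] D) (cu : D →ₗ[k] k)
    (S Sinv : D →ₗ[k] D)
    (hQT : IsQT k H R Rinv)
    (hD : IsBraidedGroupL k H R D act cm cu S)
    (hS1 : S ∘ₗ Sinv = LinearMap.id) (hS2 : Sinv ∘ₗ S = LinearMap.id) :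
    IsBraidedGroupL k H ((TensorProduct.comm k H H) Rinv) D act
      (braidLinv k H D Rinv act ∘ₗ cm) cu Sinv := by
  rw [hD.modAlg.braidLinv_eq_tensorAction_comp_comm]
  let := hQT.braidedCategory
  exact hD.braiding_inv_comp (hQT.toLinearMap_braidingEquiv _ _)
    (hQT.toLinearMap_braidingEquiv_symm _ _) hS1 hS2

end Stmt0

end DBos
end

section
/- Given a Cartan datum (I,·) and a root datum (Y,X,⟨ , ⟩) over it, the formula ⟨K_μ, g_i⟩ = q^{⟨μ,i′⟩} extends to a well-defined duality pairing ⟨ , ⟩:H⊗A→k, and the algebra homomorphisms 𝓑,𝓑̄:A→H determined by 𝓑(g_i) = K_i^{(i·i)/2} and 𝓑̄(g_i) = K_i^{−(i·i)/2} constitute a weak quasitriangular structure making (H,A) = (kY, kZ[I]) a weakly quasitriangular dual pair; in particular 𝓑̄ = 𝓑⁻¹ and ⟨𝓑̄(a),b⟩ = ⟨𝓑⁻¹(b),a⟩ for all a,b∈A. -/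
/-!
A linear map out of a group algebra is determined by its values on the group, where the elements are
group-like, so that convolution is pointwise multiplication there. Hence every identity asked for is
an identity between values at group elements. A pairing of `kΓ` with `kΛ` is thus a bicharacter
`χ : Γ × Λ → kˣ`, a homomorphism `φ : Λ → Γ` induces `𝓑 : kΛ → kΓ` with convolution inverse induced
by `-φ`, and as `Γ` is commutative, `𝓑(g_ν) K_μ 𝓑(g_ν)⁻¹ = K_μ`, which is the relation between the
two derivatives. The remaining relation `⟨𝓑̄(a), b⟩ = ⟨𝓑⁻¹(b), a⟩` says that
`(ν, ν') ↦ χ(φ ν, ν')` is symmetric. For `χ(μ, ν) = q^⟨μ, ν'⟩` and `φ(i) = (i·i)/2 • i` this is the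
symmetry of the Cartan datum, because `(i·i)/2 ⟨i, j'⟩ = i·j`.
-/

open TensorProduct LinearMap

namespace DBosLus

variable (k : Type) [Field k]

/-- The four-fold transposition `(V⊗W)⊗(X⊗Y) → (V⊗X)⊗(W⊗Y)`. -/
noncomputable def tttc (V W X Y : Type) [AddCommGroup V] [Module k V] [AddCommGroup W]
    [Module k W] [AddCommGroup X] [Module k X] [AddCommGroup Y] [Module k Y] :
    (V ⊗[k] W) ⊗[k] (X ⊗[k] Y) →ₗ[k] (V ⊗[k] X) ⊗[k] (W ⊗[k] Y) :=
  (TensorProduct.tensorTensorTensorComm k V W X Y).toLinearMap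

section Convolution

open Coalgebra WithConv

variable {R C B ι : Type*} [CommSemiring R] [AddCommMonoid C] [Module R C] [Coalgebra R C]
  [Semiring B] [Algebra R B]

lemma convMul_apply_of_isGroupLikeElem {c : C} (hc : IsGroupLikeElem R c)
    (f f' : WithConv (C →ₗ[R] B)) : (f * f') c = f c * f' c := by
  simp [hc.comul_eq_tmul_self]

lemma convMul_convMul_apply_eq_sum (f f' f'' : WithConv (C →ₗ[R] B)) {c : C} {s : Finset ι}
    {c₁ c₂ c₃ : ι → C}
    (hc : (rTensor C (comul (R := R)) ∘ₗ comul) c = ∑ i ∈ s, (c₁ i ⊗ₜ[R] c₂ i) ⊗ₜ[R] c₃ i) :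
    (f * f' * f'') c = ∑ i ∈ s, f (c₁ i) * f' (c₂ i) * f'' (c₃ i) := by
  have h_map : TensorProduct.map (f * f').ofConv f''.ofConv =
      TensorProduct.map (mul' R B ∘ₗ TensorProduct.map f.ofConv f'.ofConv) f''.ofConv ∘ₗ
        rTensor C comul := by
    rw [map_comp_rTensor]
    rfl
  rw [convMul_apply, h_map, LinearMap.comp_apply, ← LinearMap.comp_apply (rTensor C comul), hc]
  simp

end Convolution

section WeaklyQuasitriangular

open Coalgebra WithConv

variable {R H A ι κ : Type*} [CommSemiring R]

section AntiCoalgHom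

variable [AddCommMonoid H] [Module R H] [Coalgebra R H] [AddCommMonoid A] [Module R A]
  [Coalgebra R A]

/-- A coalgebra map into the co-opposite coalgebra. -/
structure IsAntiCoalgHom (f : A →ₗ[R] H) : Prop where
  counit_comp : counit ∘ₗ f = counit
  comul_comp : comul ∘ₗ f = (TensorProduct.comm R H H).toLinearMap ∘ₗ TensorProduct.map f f ∘ₗ comul

lemma IsAntiCoalgHom.comul_apply {f : A →ₗ[R] H} (hf : IsAntiCoalgHom f) {a : A}
    (𝓡 : Coalgebra.Repr R a ι) :
    comul (R := R) (f a) = ∑ i ∈ 𝓡.index, f (𝓡.right i) ⊗ₜ[R] f (𝓡.left i) := by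
  rw [← LinearMap.comp_apply, hf.comul_comp]
  simp [← 𝓡.eq]

end AntiCoalgHom

section HopfPairing

variable [Semiring H] [HopfAlgebra R H] [Semiring A] [HopfAlgebra R A] {P : H →ₗ[R] A →ₗ[R] R}

/-- A duality pairing of Hopf algebras. The products are convolutions in `A →ₗ[R] R` and
`H →ₗ[R] R`, so that `mul_left` says `⟨h h', a⟩ = ⟨h, a₍₁₎⟩ ⟨h', a₍₂₎⟩`. -/
structure IsHopfPairing (P : H →ₗ[R] A →ₗ[R] R) : Prop where
  mul_left : ∀ h h', toConv (P (h * h')) = toConv (P h) * toConv (P h')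
  mul_right : ∀ a a', toConv (P.flip (a * a')) = toConv (P.flip a) * toConv (P.flip a')
  one_left : P 1 = counit
  one_right : P.flip 1 = counit
  antipode_left : ∀ h a, P (HopfAlgebra.antipode R h) a = P h (HopfAlgebra.antipode R a)

lemma IsHopfPairing.mul_left_apply (hP : IsHopfPairing P) (h h' : H) {a : A}
    (𝓡 : Coalgebra.Repr R a ι) :
    P (h * h') a = ∑ i ∈ 𝓡.index, P h (𝓡.left i) * P h' (𝓡.right i) :=
  (congr($(hP.mul_left h h') a)).trans (𝓡.convMul_apply _ _)

lemma IsHopfPairing.mul_right_apply (hP : IsHopfPairing P) {h : H} (a a' : A)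
    (𝓡 : Coalgebra.Repr R h ι) :
    P h (a * a') = ∑ i ∈ 𝓡.index, P (𝓡.left i) a * P (𝓡.right i) a' :=
  (congr($(hP.mul_right a a') h)).trans (𝓡.convMul_apply _ _)

end HopfPairing

section Derivatives

variable [AddCommMonoid H] [Module R H] [Coalgebra R H] [AddCommMonoid A] [Module R A]

/-- The left derivative `∂ᴸ h : a ↦ ⟨h₍₁₎, a⟩ h₍₂₎` with respect to a pairing. -/
noncomputable def leftDeriv (P : H →ₗ[R] A →ₗ[R] R) : H →ₗ[R] A →ₗ[R] H :=
  TensorProduct.lift (smulRightₗ ∘ₗ P) ∘ₗ comul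

/-- The right derivative `∂ᴿ h : a ↦ h₍₁₎ ⟨h₍₂₎, a⟩` with respect to a pairing. -/
noncomputable def rightDeriv (P : H →ₗ[R] A →ₗ[R] R) : H →ₗ[R] A →ₗ[R] H :=
  TensorProduct.lift (smulRightₗ ∘ₗ P).flip ∘ₗ comul

lemma leftDeriv_apply (P : H →ₗ[R] A →ₗ[R] R) {h : H} (𝓡 : Coalgebra.Repr R h ι) (a : A) :
    leftDeriv P h a = ∑ i ∈ 𝓡.index, P (𝓡.left i) a • 𝓡.right i := by
  simp [leftDeriv, ← 𝓡.eq]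

lemma rightDeriv_apply (P : H →ₗ[R] A →ₗ[R] R) {h : H} (𝓡 : Coalgebra.Repr R h ι) (a : A) :
    rightDeriv P h a = ∑ i ∈ 𝓡.index, P (𝓡.right i) a • 𝓡.left i := by
  simp [rightDeriv, ← 𝓡.eq]

lemma leftDeriv_apply_of_isGroupLikeElem (P : H →ₗ[R] A →ₗ[R] R) {h : H}
    (hh : IsGroupLikeElem R h) (a : A) : leftDeriv P h a = P h a • h := by
  simp [leftDeriv, hh.comul_eq_tmul_self]

lemma rightDeriv_apply_of_isGroupLikeElem (P : H →ₗ[R] A →ₗ[R] R) {h : H}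
    (hh : IsGroupLikeElem R h) (a : A) : rightDeriv P h a = P h a • h := by
  simp [rightDeriv, hh.comul_eq_tmul_self]

end Derivatives

section DerivIntertwiner

variable [Semiring H] [Bialgebra R H] [AddCommMonoid A] [Module R A] [Coalgebra R A]

/-- An anti-coalgebra map `r` with convolution inverse `s` such that `∂ᴿ h = r * ∂ᴸ h * s` for
all `h`: the conditions that a weak quasitriangular structure imposes on each of `𝓑` and `𝓑̄`
separately. -/
structure IsDerivIntertwiner (P : H →ₗ[R] A →ₗ[R] R) (r s : A →ₗ[R] H) : Prop where
  isAntiCoalgHom : IsAntiCoalgHom r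
  convMul_inv : toConv r * toConv s = 1
  inv_convMul : toConv s * toConv r = 1
  rightDeriv_eq : ∀ h, toConv (rightDeriv P h) = toConv r * toConv (leftDeriv P h) * toConv s

namespace IsDerivIntertwiner

variable {P : H →ₗ[R] A →ₗ[R] R} {r s : A →ₗ[R] H}

lemma sum_mul_inv (hr : IsDerivIntertwiner P r s) {a : A} (𝓡 : Coalgebra.Repr R a ι) :
    ∑ i ∈ 𝓡.index, r (𝓡.left i) * s (𝓡.right i) = counit (R := R) a • (1 : H) := by
  rw [← Algebra.algebraMap_eq_smul_one]
  exact (𝓡.convMul_apply _ _).symm.trans congr($hr.convMul_inv a)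

lemma sum_inv_mul (hr : IsDerivIntertwiner P r s) {a : A} (𝓡 : Coalgebra.Repr R a ι) :
    ∑ i ∈ 𝓡.index, s (𝓡.left i) * r (𝓡.right i) = counit (R := R) a • (1 : H) := by
  rw [← Algebra.algebraMap_eq_smul_one]
  exact (𝓡.convMul_apply _ _).symm.trans congr($hr.inv_convMul a)

lemma sum_smul_eq_sum_sum_smul (hr : IsDerivIntertwiner P r s) {h : H} (𝓡 : Coalgebra.Repr R h ι)
    {a : A} {t : Finset κ} {a₁ a₂ a₃ : κ → A}
    (ha : (rTensor A (comul (R := R)) ∘ₗ comul) a = ∑ m ∈ t, (a₁ m ⊗ₜ[R] a₂ m) ⊗ₜ[R] a₃ m) :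
    ∑ j ∈ 𝓡.index, P (𝓡.right j) a • 𝓡.left j =
      ∑ m ∈ t, ∑ j ∈ 𝓡.index, P (𝓡.left j) (a₂ m) • (r (a₁ m) * 𝓡.right j * s (a₃ m)) :=
  calc ∑ j ∈ 𝓡.index, P (𝓡.right j) a • 𝓡.left j
    _ = rightDeriv P h a := (rightDeriv_apply P 𝓡 a).symm
    _ = ∑ m ∈ t, r (a₁ m) * leftDeriv P h (a₂ m) * s (a₃ m) :=
      congr($(hr.rightDeriv_eq h) a).trans (convMul_convMul_apply_eq_sum _ _ _ ha)
    _ = _ := by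
      simp only [leftDeriv_apply P 𝓡, Finset.mul_sum, Finset.sum_mul, mul_smul_comm,
        smul_mul_assoc]

end IsDerivIntertwiner

end DerivIntertwiner

/-- `ρ = 𝓑` and `ρbar = 𝓑̄`, with convolution inverses `ρinv` and `ρbarinv`, form a weak
quasitriangular structure on the Hopf algebras `H` and `A` paired by `P`. -/
structure IsWeaklyQuasitriangular [Semiring H] [HopfAlgebra R H] [Semiring A] [HopfAlgebra R A]
    (P : H →ₗ[R] A →ₗ[R] R) (ρ ρbar : A →ₐ[R] H) (ρinv ρbarinv : A →ₗ[R] H) : Prop where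
  isHopfPairing : IsHopfPairing P
  isDerivIntertwiner : IsDerivIntertwiner P ρ.toLinearMap ρinv
  isDerivIntertwiner_bar : IsDerivIntertwiner P ρbar.toLinearMap ρbarinv
  pairing_bar : ∀ a b, P (ρbar a) b = P (ρinv b) a

end WeaklyQuasitriangular

section GroupLikeBasis

open Coalgebra WithConv Module

variable {R Γ Λ H A : Type*} [CommSemiring R] [Semiring H] [Semiring A]

/-- A basis `b` of group-like elements, indexed by an additive monoid `Γ` and multiplicative in the
index: this identifies `H` with the monoid bialgebra `RΓ`. -/
structure IsGroupLikeBasis [AddMonoid Γ] [Bialgebra R H] (b : Basis Γ R H) : Prop where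
  map_zero : b 0 = 1
  map_add : ∀ γ γ', b (γ + γ') = b γ * b γ'
  isGroupLikeElem : ∀ γ, IsGroupLikeElem R (b γ)

lemma isGroupLikeBasis_mk {R H : Type*} [CommRing R] [Ring H] [Bialgebra R H] [AddMonoid Γ]
    {b : Γ → H} (hli : LinearIndependent R b) (hspan : Submodule.span R (Set.range b) = ⊤)
    (h0 : b 0 = 1) (hadd : ∀ γ γ', b (γ + γ') = b γ * b γ') (hb : ∀ γ, IsGroupLikeElem R (b γ)) :
    IsGroupLikeBasis (Basis.mk hli hspan.ge) :=
  ⟨by simpa, by simpa, by simpa⟩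

lemma IsGroupLikeBasis.antipode_apply [AddGroup Γ] [HopfAlgebra R H] {b : Basis Γ R H}
    (hb : IsGroupLikeBasis b) (γ : Γ) : HopfAlgebra.antipode R (b γ) = b (-γ) :=
  left_inv_eq_right_inv (hb.isGroupLikeElem γ).antipode_mul_cancel
    (by rw [← hb.map_add, add_neg_cancel, hb.map_zero])

section MapAlgHom

variable [AddMonoid Γ] [AddMonoid Λ] [Bialgebra R H] [Bialgebra R A] {K : Basis Γ R H}
  {g : Basis Λ R A}

/-- The algebra map `RΛ → RΓ` induced by a homomorphism `Λ → Γ`. -/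
noncomputable def IsGroupLikeBasis.mapAlgHom (hg : IsGroupLikeBasis g) (hK : IsGroupLikeBasis K)
    (φ : Λ →+ Γ) : A →ₐ[R] H :=
  .ofLinearMap (g.constr R (K ∘ φ)) (by rw [← hg.map_zero, g.constr_basis]; simp [hK.map_zero])
    fun a a' ↦ by
      have h_mul : (LinearMap.mul R A).compr₂ (g.constr R (K ∘ φ)) =
          (LinearMap.mul R H).compl₁₂ (g.constr R (K ∘ φ)) (g.constr R (K ∘ φ)) :=
        g.ext fun ν ↦ g.ext fun ν' ↦ by simp [← hg.map_add, hK.map_add]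
      exact congr($h_mul a a')

lemma IsGroupLikeBasis.mapAlgHom_apply (hg : IsGroupLikeBasis g) (hK : IsGroupLikeBasis K)
    (φ : Λ →+ Γ) (ν : Λ) : hg.mapAlgHom hK φ (g ν) = K (φ ν) :=
  g.constr_basis R _ ν

lemma IsGroupLikeBasis.isAntiCoalgHom_mapAlgHom (hg : IsGroupLikeBasis g)
    (hK : IsGroupLikeBasis K) (φ : Λ →+ Γ) :
    IsAntiCoalgHom (hg.mapAlgHom hK φ).toLinearMap where
  counit_comp := g.ext fun ν ↦ by
    simp [hg.mapAlgHom_apply hK, (hK.isGroupLikeElem _).counit_eq_one,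
      (hg.isGroupLikeElem _).counit_eq_one]
  comul_comp := g.ext fun ν ↦ by
    simp [hg.mapAlgHom_apply hK, (hK.isGroupLikeElem _).comul_eq_tmul_self,
      (hg.isGroupLikeElem _).comul_eq_tmul_self]

end MapAlgHom

section Inverse

variable [AddCommMonoid Γ] [AddMonoid Λ] [Bialgebra R H] [Bialgebra R A] {K : Basis Γ R H}
  {g : Basis Λ R A}

lemma IsGroupLikeBasis.mapAlgHom_convMul_mapAlgHom (hg : IsGroupLikeBasis g)
    (hK : IsGroupLikeBasis K) {φ ψ : Λ →+ Γ} (hφψ : φ + ψ = 0) :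
    toConv (hg.mapAlgHom hK φ).toLinearMap * toConv (hg.mapAlgHom hK ψ).toLinearMap = 1 :=
  WithConv.ext <| g.ext fun ν ↦ by
    refine (convMul_apply_of_isGroupLikeElem (hg.isGroupLikeElem ν) _ _).trans ?_
    simp [hg.mapAlgHom_apply hK, ← hK.map_add, ← AddMonoidHom.add_apply, hφψ, hK.map_zero,
      (hg.isGroupLikeElem ν).counit_eq_one]

lemma IsGroupLikeBasis.isDerivIntertwiner_mapAlgHom (hg : IsGroupLikeBasis g)
    (hK : IsGroupLikeBasis K) (P : H →ₗ[R] A →ₗ[R] R) {φ ψ : Λ →+ Γ} (hφψ : φ + ψ = 0) :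
    IsDerivIntertwiner P (hg.mapAlgHom hK φ).toLinearMap (hg.mapAlgHom hK ψ).toLinearMap where
  isAntiCoalgHom := hg.isAntiCoalgHom_mapAlgHom hK φ
  convMul_inv := hg.mapAlgHom_convMul_mapAlgHom hK hφψ
  inv_convMul := hg.mapAlgHom_convMul_mapAlgHom hK (by rw [add_comm, hφψ])
  rightDeriv_eq h := WithConv.ext <| g.ext fun ν ↦ by
    have h_conj (μ : Γ) : K (φ ν) * K μ * K (ψ ν) = K μ := by
      rw [← hK.map_add, ← hK.map_add, add_right_comm, ← AddMonoidHom.add_apply, hφψ,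
        AddMonoidHom.zero_apply, zero_add]
    have h_flip : (rightDeriv P).flip (g ν) =
        mulLeftRight R (K (φ ν), K (ψ ν)) ∘ₗ (leftDeriv P).flip (g ν) :=
      K.ext fun μ ↦ by
        simp [leftDeriv_apply_of_isGroupLikeElem P (hK.isGroupLikeElem μ),
          rightDeriv_apply_of_isGroupLikeElem P (hK.isGroupLikeElem μ), h_conj]
    calc rightDeriv P h (g ν)
      _ = K (φ ν) * leftDeriv P h (g ν) * K (ψ ν) := congr($h_flip h)
      _ = _ := by
        rw [convMul_apply_of_isGroupLikeElem (hg.isGroupLikeElem ν),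
          convMul_apply_of_isGroupLikeElem (hg.isGroupLikeElem ν)]
        simp [hg.mapAlgHom_apply hK]

end Inverse

end GroupLikeBasis

section Bicharacter

open Coalgebra WithConv Module

variable {R Γ Λ H A : Type*} [CommSemiring R]

section Pairing

variable [AddMonoid Γ] [AddMonoid Λ] [AddCommMonoid H] [Module R H] [AddCommMonoid A] [Module R A]
  (K : Basis Γ R H) (g : Basis Λ R A) (χ : Γ →+ Λ →+ Additive Rˣ)

/-- The pairing `⟨K_μ, g_ν⟩ = χ(μ, ν)` of two modules with bases `K` and `g`, for a bicharacter `χ`,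
which is encoded as a biadditive map into `Additive Rˣ`. -/
noncomputable def bicharPairing : H →ₗ[R] A →ₗ[R] R :=
  K.constr R fun μ ↦ g.constr R fun ν ↦ ((χ μ ν).toMul : R)

lemma bicharPairing_apply (μ : Γ) (ν : Λ) :
    bicharPairing K g χ (K μ) (g ν) = ((χ μ ν).toMul : R) := by
  simp [bicharPairing]

end Pairing

variable [Semiring H] [HopfAlgebra R H] [Semiring A] [HopfAlgebra R A] {K : Basis Γ R H}
  {g : Basis Λ R A}

lemma isHopfPairing_bicharPairing [AddGroup Γ] [AddGroup Λ] (hK : IsGroupLikeBasis K)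
    (hg : IsGroupLikeBasis g) (χ : Γ →+ Λ →+ Additive Rˣ) :
    IsHopfPairing (bicharPairing K g χ) where
  mul_left h h' := by
    set P := bicharPairing K g χ
    refine WithConv.ext <| g.ext fun ν ↦ ?_
    have h_mul : (LinearMap.mul R H).compr₂ (P.flip (g ν)) =
        (LinearMap.mul R R).compl₁₂ (P.flip (g ν)) (P.flip (g ν)) :=
      K.ext fun μ ↦ K.ext fun μ' ↦ by simp [P, ← hK.map_add, bicharPairing_apply]
    exact congr($h_mul h h').trans
      (convMul_apply_of_isGroupLikeElem (hg.isGroupLikeElem ν) (toConv (P h)) (toConv (P h'))).symm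
  mul_right a a' := by
    set P := bicharPairing K g χ
    refine WithConv.ext <| K.ext fun μ ↦ ?_
    have h_mul : (LinearMap.mul R A).compr₂ (P (K μ)) =
        (LinearMap.mul R R).compl₁₂ (P (K μ)) (P (K μ)) :=
      g.ext fun ν ↦ g.ext fun ν' ↦ by simp [P, ← hg.map_add, bicharPairing_apply]
    exact congr($h_mul a a').trans (convMul_apply_of_isGroupLikeElem (hK.isGroupLikeElem μ)
      (toConv (P.flip a)) (toConv (P.flip a'))).symm
  one_left := g.ext fun ν ↦ by
    simp [← hK.map_zero, bicharPairing_apply, (hg.isGroupLikeElem ν).counit_eq_one]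
  one_right := K.ext fun μ ↦ by
    simp [← hg.map_zero, bicharPairing_apply, (hK.isGroupLikeElem μ).counit_eq_one]
  antipode_left h a := by
    set P := bicharPairing K g χ
    have h_antipode : P ∘ₗ HopfAlgebra.antipode R = P.compl₂ (HopfAlgebra.antipode R) :=
      K.ext fun μ ↦ g.ext fun ν ↦ by
        simp [P, hK.antipode_apply, hg.antipode_apply, bicharPairing_apply]
    exact congr($h_antipode h a)

theorem isWeaklyQuasitriangular_bicharPairing [AddCommGroup Γ] [AddGroup Λ]
    (hK : IsGroupLikeBasis K) (hg : IsGroupLikeBasis g) (χ : Γ →+ Λ →+ Additive Rˣ) (φ : Λ →+ Γ)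
    (hφ : ∀ ν ν', χ (φ ν) ν' = χ (φ ν') ν) :
    IsWeaklyQuasitriangular (bicharPairing K g χ) (hg.mapAlgHom hK φ) (hg.mapAlgHom hK (-φ))
      (hg.mapAlgHom hK (-φ)).toLinearMap (hg.mapAlgHom hK φ).toLinearMap where
  isHopfPairing := isHopfPairing_bicharPairing hK hg χ
  isDerivIntertwiner := hg.isDerivIntertwiner_mapAlgHom hK _ (add_neg_cancel φ)
  isDerivIntertwiner_bar := hg.isDerivIntertwiner_mapAlgHom hK _ (neg_add_cancel φ)
  pairing_bar a b := by
    set P := bicharPairing K g χ ∘ₗ (hg.mapAlgHom hK (-φ)).toLinearMap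
    have h_symm : P = P.flip := g.ext fun ν ↦ g.ext fun ν' ↦ by
      simp [P, hg.mapAlgHom_apply hK, bicharPairing_apply, hφ ν ν']
    exact congr($h_symm a b)

end Bicharacter

section RootDatum

open Module

variable {R I Y X : Type*} [CommSemiring R] [AddCommGroup Y] [AddCommGroup X]

/-- The bicharacter `(μ, ν) ↦ q ^ E(μ, ν)`. -/
def zpowBichar (q : Rˣ) (E : Y →ₗ[ℤ] X →ₗ[ℤ] ℤ) :
    Y →+ X →+ Additive Rˣ :=
  (AddMonoidHom.compHom (zmultiplesHom _ (.ofMul q))).comp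
    (toAddMonoidHom'.comp E.toAddMonoidHom)

lemma toMul_zpowBichar_apply (q : Rˣ) (E : Y →ₗ[ℤ] X →ₗ[ℤ] ℤ)
    (μ : Y) (ν : X) : (zpowBichar q E μ ν).toMul = q ^ E μ ν := by
  simp [zpowBichar]

lemma pairing_linearCombination_symm (p : Y →ₗ[ℤ] X →ₗ[ℤ] ℤ) {y : I → Y} {x : I → X}
    (hsymm : ∀ i j, p (y i) (x j) = p (y j) (x i)) (ν ν' : I →₀ ℤ) :
    p (Finsupp.linearCombination ℤ y ν) (Finsupp.linearCombination ℤ x ν') =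
      p (Finsupp.linearCombination ℤ y ν') (Finsupp.linearCombination ℤ x ν) := by
  set B := p.compl₁₂ (Finsupp.linearCombination ℤ y) (Finsupp.linearCombination ℤ x)
  have h_symm : B = B.flip := by
    ext i j
    simpa [B] using hsymm i j
  exact congr($h_symm ν ν')

theorem lusztig_weak_qt_stmt8_general {H A : Type*} [Semiring H] [HopfAlgebra R H]
    [Semiring A] [HopfAlgebra R A] (p : Y →ₗ[ℤ] X →ₗ[ℤ] ℤ) (d : I → ℤ)
    (iY : I → Y) (iX : I → X) (hsymm : ∀ i j, d i * p (iY i) (iX j) = d j * p (iY j) (iX i))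
    (q : Rˣ) {K : Basis Y R H} (hK : IsGroupLikeBasis K) {g : Basis (I →₀ ℤ) R A}
    (hg : IsGroupLikeBasis g) :
    ∃ (P : H →ₗ[R] A →ₗ[R] R) (ρ ρbar : A →ₐ[R] H),
      (∀ μ ν, P (K μ) (g ν) = ↑(q ^ p μ (Finsupp.linearCombination ℤ iX ν))) ∧
      (∀ i, ρ (g (Finsupp.single i 1)) = K (d i • iY i)) ∧
      (∀ i, ρbar (g (Finsupp.single i 1)) = K (-(d i • iY i))) ∧
      IsWeaklyQuasitriangular P ρ ρbar ρbar.toLinearMap ρ.toLinearMap := by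
  let χ := zpowBichar q (p.compl₂ (Finsupp.linearCombination ℤ iX))
  let φ : (I →₀ ℤ) →+ Y := (Finsupp.linearCombination ℤ fun i ↦ d i • iY i).toAddMonoidHom
  have hχ (μ ν) : (χ μ ν).toMul = q ^ p μ (Finsupp.linearCombination ℤ iX ν) :=
    toMul_zpowBichar_apply q _ μ ν
  have hφ (i) : φ (Finsupp.single i 1) = d i • iY i := by simp [φ]
  have hχφ (ν ν') : χ (φ ν) ν' = χ (φ ν') ν := by
    refine Additive.toMul.injective ?_
    rw [hχ, hχ]
    exact congrArg (q ^ ·) (pairing_linearCombination_symm p (by simpa using hsymm) ν ν')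
  refine ⟨bicharPairing K g χ, hg.mapAlgHom hK φ, hg.mapAlgHom hK (-φ), fun μ ν ↦ ?_, fun i ↦ ?_,
    fun i ↦ ?_, isWeaklyQuasitriangular_bicharPairing hK hg χ φ hχφ⟩
  · rw [bicharPairing_apply, hχ]
  · rw [hg.mapAlgHom_apply, hφ]
  · rw [hg.mapAlgHom_apply, AddMonoidHom.neg_apply, hφ]

end RootDatum

/-- Lemma 4.1.  Given a Cartan datum `(I,·)` and a root datum
`(Y,X,⟨ , ⟩)` over it, the formula `⟨K_μ, g_i⟩ = q^{⟨μ,i′⟩}` extends to a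
well-defined duality pairing `⟨ , ⟩ : H ⊗ A → k` between `H = kY` and
`A = kℤ[I]`, and the algebra homomorphisms `𝓑, 𝓑̄ : A → H` determined by
`𝓑(g_i) = K_i^{(i·i)/2}` and `𝓑̄(g_i) = K_i^{-(i·i)/2}` constitute a weak
quasitriangular structure making `(H,A)` a weakly quasitriangular dual pair;
in particular `𝓑̄ = 𝓑⁻¹` and `⟨𝓑̄(a),b⟩ = ⟨𝓑⁻¹(b),a⟩` for all `a, b ∈ A`. -/
theorem lusztig_weak_qt_stmt8

    (I : Type) [Fintype I] [DecidableEq I]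
    -- the Cartan datum: a symmetric bilinear form `·` on `ℤ[I]`
    (dot : (I →₀ ℤ) →ₗ[ℤ] (I →₀ ℤ) →ₗ[ℤ] ℤ)
    (hsymm : ∀ x y, dot x y = dot y x)
    -- `i·i ∈ {2,4,6,…}`, written `i·i = 2·d i` with `d i > 0`
    (dd : I → ℕ) (hdd : ∀ i, 0 < dd i)
    (hdiag : ∀ i, dot (Finsupp.single i 1) (Finsupp.single i 1) = 2 * (dd i : ℤ))
    -- `a_{ij} = 2(i·j)/(i·i) ∈ {0,-1,-2,…}` for `i ≠ j`
    (hoff : ∀ i j, i ≠ j → ∃ a : ℕ,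
      2 * dot (Finsupp.single i 1) (Finsupp.single j 1)
        = -(a : ℤ) * dot (Finsupp.single i 1) (Finsupp.single i 1))
    -- the root datum: finitely generated free abelian groups `Y`, `X`,
    -- a perfect pairing, and embeddings `I ⊆ Y`, `I ⊆ X` with `⟨i,j′⟩ = a_{ij}`
    (Y X : Type) [AddCommGroup Y] [AddCommGroup X]
    [Module.Free ℤ Y] [Module.Finite ℤ Y] [Module.Free ℤ X] [Module.Finite ℤ X]
    (pYX : Y →ₗ[ℤ] X →ₗ[ℤ] ℤ)
    (hperf : Function.Bijective pYX ∧ Function.Bijective pYX.flip)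
    (iY : I → Y) (iX : I → X)
    (hiY : Function.Injective iY) (hiX : Function.Injective iX)
    (hroot : ∀ i j, pYX (iY i) (iX j) * dot (Finsupp.single i 1) (Finsupp.single i 1)
      = 2 * dot (Finsupp.single i 1) (Finsupp.single j 1))
    -- the parameter `q`
    (q : k) (hq : q ≠ 0)
    -- `H = kY`: a Hopf algebra with a grouplike basis `{K_μ : μ ∈ Y}`
    (H : Type) [Ring H] [HopfAlgebra k H] (K : Y → H)
    (hK0 : K 0 = 1) (hKadd : ∀ μ ν, K (μ + ν) = K μ * K ν)
    (hKcm : ∀ μ, Coalgebra.comul (R := k) (K μ) = K μ ⊗ₜ[k] K μ)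
    (hKcu : ∀ μ, Coalgebra.counit (R := k) (K μ) = 1)
    (hKS : ∀ μ, HopfAlgebra.antipode (R := k) (K μ) = K (-μ))
    (hKli : LinearIndependent k K)
    (hKspan : Submodule.span k (Set.range K) = ⊤)
    -- `A = kℤ[I]`: a Hopf algebra with a grouplike basis `{g_ν : ν ∈ ℤ[I]}`
    (A : Type) [Ring A] [HopfAlgebra k A] (g : (I →₀ ℤ) → A)
    (hg0 : g 0 = 1) (hgadd : ∀ μ ν, g (μ + ν) = g μ * g ν)
    (hgcm : ∀ ν, Coalgebra.comul (R := k) (g ν) = g ν ⊗ₜ[k] g ν)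
    (hgcu : ∀ ν, Coalgebra.counit (R := k) (g ν) = 1)
    (hgS : ∀ ν, HopfAlgebra.antipode (R := k) (g ν) = g (-ν))
    (hgli : LinearIndependent k g)
    (hgspan : Submodule.span k (Set.range g) = ⊤) :
    ∃ (P : H →ₗ[k] A →ₗ[k] k) (ρ ρbar : A →ₐ[k] H) (ρi ρbari : A →ₗ[k] H),
      -- the pairing extends `⟨K_μ, g_i⟩ = q^{⟨μ,i′⟩}`
      (∀ (μ : Y) (ν : I →₀ ℤ),
        P (K μ) (g ν) = q ^ (pYX μ ((Finsupp.linearCombination ℤ iX) ν))) ∧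
      -- `𝓑(g_i) = K_i^{(i·i)/2}`, `𝓑̄(g_i) = K_i^{-(i·i)/2}`
      (∀ i : I, ρ (g (Finsupp.single i 1)) = K ((dd i : ℤ) • iY i)) ∧
      (∀ i : I, ρbar (g (Finsupp.single i 1)) = K (-((dd i : ℤ) • iY i))) ∧
      -- `P` is a duality pairing of Hopf algebras
      (∀ (h h' : H) (a : A) (ι : Type) [Fintype ι] (a1 a2 : ι → A),
        Coalgebra.comul (R := k) a = ∑ i, a1 i ⊗ₜ[k] a2 i →
        P (h * h') a = ∑ i, P h (a1 i) * P h' (a2 i)) ∧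
      (∀ (h : H) (a a' : A) (ι : Type) [Fintype ι] (h1 h2 : ι → H),
        Coalgebra.comul (R := k) h = ∑ j, h1 j ⊗ₜ[k] h2 j →
        P h (a * a') = ∑ j, P (h1 j) a * P (h2 j) a') ∧
      (∀ a, P 1 a = Coalgebra.counit (R := k) a) ∧
      (∀ h, P h 1 = Coalgebra.counit (R := k) h) ∧
      (∀ h a, P (HopfAlgebra.antipode (R := k) h) a
        = P h (HopfAlgebra.antipode (R := k) a)) ∧
      -- `𝓑`, `𝓑̄` are anti-coalgebra maps
      (∀ (a : A) (ι : Type) [Fintype ι] (a1 a2 : ι → A),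
        Coalgebra.comul (R := k) a = ∑ i, a1 i ⊗ₜ[k] a2 i →
        Coalgebra.comul (R := k) (ρ a) = ∑ i, ρ (a2 i) ⊗ₜ[k] ρ (a1 i)
          ∧ Coalgebra.comul (R := k) (ρbar a) = ∑ i, ρbar (a2 i) ⊗ₜ[k] ρbar (a1 i)) ∧
      (∀ a, Coalgebra.counit (R := k) (ρ a) = Coalgebra.counit (R := k) a) ∧
      (∀ a, Coalgebra.counit (R := k) (ρbar a) = Coalgebra.counit (R := k) a) ∧
      -- `𝓑`, `𝓑̄` are convolution-invertible, with inverses `ρi`, `ρbari`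
      (∀ (a : A) (ι : Type) [Fintype ι] (a1 a2 : ι → A),
        Coalgebra.comul (R := k) a = ∑ i, a1 i ⊗ₜ[k] a2 i →
        (∑ i, ρ (a1 i) * ρi (a2 i) = Coalgebra.counit (R := k) a • (1 : H))
        ∧ (∑ i, ρi (a1 i) * ρ (a2 i) = Coalgebra.counit (R := k) a • (1 : H))
        ∧ (∑ i, ρbar (a1 i) * ρbari (a2 i) = Coalgebra.counit (R := k) a • (1 : H))
        ∧ (∑ i, ρbari (a1 i) * ρbar (a2 i) = Coalgebra.counit (R := k) a • (1 : H))) ∧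
      -- `𝓑̄ = 𝓑⁻¹` (as a consequence of the symmetry of `·`)
      (ρbar.toLinearMap = ρi) ∧
      -- `⟨𝓑̄(a), b⟩ = ⟨𝓑⁻¹(b), a⟩`
      (∀ a b : A, P (ρbar a) b = P (ρi b) a) ∧
      -- `∂ᴿ h = 𝓑 * (∂ᴸ h) * 𝓑⁻¹` and `∂ᴿ h = 𝓑̄ * (∂ᴸ h) * 𝓑̄⁻¹`
      (∀ (h : H) (a : A) (ι : Type) [Fintype ι] (h1 h2 : ι → H)
        (μ : Type) [Fintype μ] (a1 a2 a3 : μ → A),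
        Coalgebra.comul (R := k) h = ∑ j, h1 j ⊗ₜ[k] h2 j →
        (LinearMap.rTensor A (Coalgebra.comul (R := k)) ∘ₗ Coalgebra.comul (R := k)) a
          = ∑ m, (a1 m ⊗ₜ[k] a2 m) ⊗ₜ[k] a3 m →
        (∑ j, P (h2 j) a • h1 j
            = ∑ m, ∑ j, P (h1 j) (a2 m) • (ρ (a1 m) * h2 j * ρi (a3 m)))
        ∧ (∑ j, P (h2 j) a • h1 j
            = ∑ m, ∑ j, P (h1 j) (a2 m) • (ρbar (a1 m) * h2 j * ρbari (a3 m)))) := by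
  have hd (i j) : dd i * pYX (iY i) (iX j) = dot (.single i 1) (.single j 1) := by
    linarith [hdiag i ▸ hroot i j]
  have hK := isGroupLikeBasis_mk hKli hKspan hK0 hKadd fun μ ↦ ⟨hKcu μ, hKcm μ⟩
  have hg := isGroupLikeBasis_mk hgli hgspan hg0 hgadd fun ν ↦ ⟨hgcu ν, hgcm ν⟩
  obtain ⟨P, ρ, ρbar, hP, hρ, hρbar, hpair, hint, hint_bar, hbar⟩ :=
    lusztig_weak_qt_stmt8_general pYX (fun i ↦ dd i) iY iX (fun i j ↦ by rw [hd, hd, hsymm])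
      (Units.mk0 q hq) hK hg
  refine ⟨P, ρ, ρbar, ρbar.toLinearMap, ρ.toLinearMap, by simpa using hP, by simpa using hρ,
    by simpa using hρbar,
    fun h h' a ι _ a1 a2 ha ↦ hpair.mul_left_apply h h' ⟨Finset.univ, a1, a2, ha.symm⟩,
    fun h a a' ι _ h1 h2 hh ↦ hpair.mul_right_apply a a' ⟨Finset.univ, h1, h2, hh.symm⟩,
    fun a ↦ congr($hpair.one_left a), fun h ↦ congr($hpair.one_right h), hpair.antipode_left,
    fun a ι _ a1 a2 ha ↦ ?_, fun a ↦ congr($hint.isAntiCoalgHom.counit_comp a),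
    fun a ↦ congr($hint_bar.isAntiCoalgHom.counit_comp a), fun a ι _ a1 a2 ha ↦ ?_, rfl, hbar,
    fun h a ι _ h1 h2 μ _ a1 a2 a3 hh ha ↦ ?_⟩
  · let 𝓡 : Coalgebra.Repr k a ι := ⟨Finset.univ, a1, a2, ha.symm⟩
    exact ⟨hint.isAntiCoalgHom.comul_apply 𝓡, hint_bar.isAntiCoalgHom.comul_apply 𝓡⟩
  · let 𝓡 : Coalgebra.Repr k a ι := ⟨Finset.univ, a1, a2, ha.symm⟩
    exact ⟨hint.sum_mul_inv 𝓡, hint.sum_inv_mul 𝓡, hint_bar.sum_mul_inv 𝓡, hint_bar.sum_inv_mul 𝓡⟩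
  · let 𝓡 : Coalgebra.Repr k h ι := ⟨Finset.univ, h1, h2, hh.symm⟩
    exact ⟨hint.sum_smul_eq_sum_sum_smul 𝓡 ha, hint_bar.sum_smul_eq_sum_sum_smul 𝓡 ha⟩

end DBosLus
end
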